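/- arXiv:2108.05195 — 7 statements merged into one kernel-verified Lean document; each statement's English description precedes it below -/
import Mathlib

section
/- The Lebesgue volume of the solid R = {(x,y,z) ∈ ℝ³ : x² + y² − z² ≤ 1, y² + z² − x² ≤ 1, z² + x² − y² ≤ 1} is equal to log 256 (equivalently, 8 log 2). -/
open MeasureTheory Real

/-! The solid is invariant under sign changes and permutations of the coordinates, so its volume is
48 times that of its part in the chamber `0 < z < y < x`, where `x² + y² - z² ≤ 1` implies the other
two inequalities. This part is a cone: with `y = x a` and `z = x b` it reads `0 < b < a < 1`,
`0 < x ≤ (1 + a² - b²)^(-1/2)`. Its volume is therefore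
`(1/3) ∫₀¹ ∫₀ᵃ (1 + a² - b²)^(-3/2) db da = (1/3) ∫₀¹ a / (1 + a²) da = (log 2) / 6`. -/

section Symmetry

variable {α : Type*} [MeasurableSpace α] {μ : Measure α} {S : Set α} {τ : α → α}

theorem measure_eq_mul_measure_inter_of_existsUnique_iterate_mem {D : Set α} {n : ℕ}
    (hS : MeasurableSet S) (hD : MeasurableSet D) (hτ : MeasurePreserving τ μ μ)
    (hτS : τ ⁻¹' S = S) (hτD : ∀ᵐ p ∂μ, ∃! i : Fin n, τ^[i] p ∈ D) :
    μ S = n * μ (S ∩ D) := by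
  have hpre (i : ℕ) : τ^[i] ⁻¹' (S ∩ D) = S ∩ τ^[i] ⁻¹' D := by
    rw [Set.preimage_inter, Set.preimage_iterate_eq, Function.iterate_fixed hτS]
  have hmeas (i : ℕ) : MeasurableSet (τ^[i] ⁻¹' (S ∩ D)) :=
    (hτ.iterate i).measurable (hS.inter hD)
  have hcover : S =ᵐ[μ] (⋃ i : Fin n, τ^[i] ⁻¹' (S ∩ D) : Set α) := by
    filter_upwards [hτD] with p hp
    refine propext (?_ : p ∈ S ↔ p ∈ ⋃ i : Fin n, τ^[i] ⁻¹' (S ∩ D))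
    simp only [hpre, Set.mem_iUnion, Set.mem_inter_iff, Set.mem_preimage, exists_and_left,
      hp.exists, and_true]
  have hdisjoint : Pairwise (Function.onFun (AEDisjoint μ) fun i : Fin n ↦ τ^[i] ⁻¹' (S ∩ D)) := by
    refine fun i j hij ↦ measure_eq_zero_iff_ae_notMem.2 ?_
    filter_upwards [hτD] with p hp
    exact fun ⟨hi, hj⟩ ↦ hij (hp.unique hi.2 hj.2)
  calc μ S = ∑ i : Fin n, μ (τ^[i] ⁻¹' (S ∩ D)) := by
        rw [measure_congr hcover, measure_iUnion₀ hdisjoint fun i ↦ (hmeas i).nullMeasurableSet,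
          tsum_fintype]
    _ = n * μ (S ∩ D) := by
        simp only [fun i : ℕ ↦ (hτ.iterate i).measure_preimage (hS.inter hD).nullMeasurableSet,
          Finset.sum_const, Finset.card_univ, Fintype.card_fin, nsmul_eq_mul]

theorem measure_eq_two_mul_measure_inter_pos {f : α → ℝ} (hS : MeasurableSet S)
    (hτ : MeasurePreserving τ μ μ) (hτS : τ ⁻¹' S = S) (hf : Measurable f)
    (hfτ : ∀ p, f (τ p) = -f p) (hf₀ : ∀ᵐ p ∂μ, f p ≠ 0) :
    μ S = 2 * μ (S ∩ {p | 0 < f p}) := by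
  refine measure_eq_mul_measure_inter_of_existsUnique_iterate_mem (n := 2) hS
    (measurableSet_lt measurable_const hf) hτ hτS ?_
  filter_upwards [hf₀] with p hp
  rcases hp.lt_or_gt with hneg | hpos
  · exact ⟨1, by simpa [hfτ] using hneg, by simp [Fin.forall_fin_two, hneg.le]⟩
  · exact ⟨0, by simpa using hpos, by simp [Fin.forall_fin_two, hfτ, hpos.le]⟩

end Symmetry

section Coordinates

variable {S : Set (ℝ × ℝ × ℝ)}

/-- The open positive octant, a fundamental domain for the sign changes of the coordinates. -/
def positiveOctant : Set (ℝ × ℝ × ℝ) :=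
  {p | 0 < p.1 ∧ 0 < p.2.1 ∧ 0 < p.2.2}

/-- The triples with strictly decreasing entries, a fundamental domain for the permutations of the
coordinates. -/
def decreasingTriples : Set (ℝ × ℝ × ℝ) :=
  {p | p.2.2 < p.2.1 ∧ p.2.1 < p.1}

theorem measurableSet_positiveOctant : MeasurableSet positiveOctant := by
  unfold positiveOctant
  measurability

theorem volume_eq_eight_mul_volume_inter_positiveOctant (hS : MeasurableSet S)
    (habs : ∀ x y z, (|x|, |y|, |z|) ∈ S ↔ (x, y, z) ∈ S) :
    volume S = 8 * volume (S ∩ positiveOctant) := by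
  have hid : MeasurePreserving (id : ℝ → ℝ) := .id _
  have hneg : MeasurePreserving (Neg.neg : ℝ → ℝ) := Measure.measurePreserving_neg _
  have hflip {x₁ y₁ z₁ x₂ y₂ z₂ : ℝ} (hx : |x₁| = |x₂|) (hy : |y₁| = |y₂|) (hz : |z₁| = |z₂|) :
      (x₁, y₁, z₁) ∈ S ↔ (x₂, y₂, z₂) ∈ S := by
    rw [← habs x₁, ← habs x₂, hx, hy, hz]
  have hSx : MeasurableSet (S ∩ {p | 0 < p.1}) := hS.inter (by measurability)
  have hSxy : MeasurableSet (S ∩ {p | 0 < p.1} ∩ {p | 0 < p.2.1}) := hSx.inter (by measurability)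
  have hx : volume S = 2 * volume (S ∩ {p | 0 < p.1}) :=
    measure_eq_two_mul_measure_inter_pos hS (hneg.prod (hid.prod hid))
      (Set.ext fun _ ↦ hflip (abs_neg _) rfl rfl) measurable_fst (fun _ ↦ rfl)
      (Measure.quasiMeasurePreserving_fst.ae (Measure.ae_ne volume 0))
  have hy : volume (S ∩ {p | 0 < p.1}) = 2 * volume (S ∩ {p | 0 < p.1} ∩ {p | 0 < p.2.1}) :=
    measure_eq_two_mul_measure_inter_pos hSx (hid.prod (hneg.prod hid))
      (Set.ext fun _ ↦ and_congr (hflip rfl (abs_neg _) rfl) .rfl)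
      measurable_snd.fst (fun _ ↦ rfl)
      ((Measure.quasiMeasurePreserving_fst.comp Measure.quasiMeasurePreserving_snd).ae
        (Measure.ae_ne volume 0))
  have hz : volume (S ∩ {p | 0 < p.1} ∩ {p | 0 < p.2.1}) =
      2 * volume (S ∩ {p | 0 < p.1} ∩ {p | 0 < p.2.1} ∩ {p | 0 < p.2.2}) :=
    measure_eq_two_mul_measure_inter_pos hSxy (hid.prod (hid.prod hneg))
      (Set.ext fun _ ↦ and_congr (and_congr (hflip rfl rfl (abs_neg _)) .rfl) .rfl)
      measurable_snd.snd (fun _ ↦ rfl)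
      ((Measure.quasiMeasurePreserving_snd.comp Measure.quasiMeasurePreserving_snd).ae
        (Measure.ae_ne volume 0))
  have hoctant : S ∩ {p | 0 < p.1} ∩ {p | 0 < p.2.1} ∩ {p | 0 < p.2.2} = S ∩ positiveOctant := by
    simp only [Set.inter_assoc]
    rfl
  rw [hx, hy, hz, hoctant, ← mul_assoc, ← mul_assoc]
  norm_num

theorem measurePreserving_rotate :
    MeasurePreserving fun p : ℝ × ℝ × ℝ ↦ (p.2.1, p.2.2, p.1) :=
  (measurePreserving_prodAssoc (volume : Measure ℝ) volume volume).comp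
    Measure.measurePreserving_swap

theorem ae_snd_fst_ne_snd_snd : ∀ᵐ p : ℝ × ℝ × ℝ, p.2.1 ≠ p.2.2 := by
  have hsub : Measure.QuasiMeasurePreserving fun p : ℝ × ℝ × ℝ ↦ p.2.1 - p.2.2 :=
    (quasiMeasurePreserving_sub volume volume).comp Measure.quasiMeasurePreserving_snd
  filter_upwards [hsub.ae (Measure.ae_ne volume 0)] with p hp using sub_ne_zero.1 hp

theorem volume_eq_three_mul_volume_inter_fst_largest (hS : MeasurableSet S)
    (hrotate : ∀ x y z, (y, z, x) ∈ S ↔ (x, y, z) ∈ S) :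
    volume S = 3 * volume (S ∩ {p | p.2.1 < p.1 ∧ p.2.2 < p.1}) := by
  refine measure_eq_mul_measure_inter_of_existsUnique_iterate_mem (n := 3) hS (by measurability)
    measurePreserving_rotate (Set.ext fun p ↦ hrotate _ _ _) ?_
  have hρ := measurePreserving_rotate.quasiMeasurePreserving
  filter_upwards [ae_snd_fst_ne_snd_snd, hρ.ae ae_snd_fst_ne_snd_snd,
    (hρ.comp hρ).ae ae_snd_fst_ne_snd_snd] with ⟨x, y, z⟩ hyz hzx hxy
  have hlargest : (y < x ∧ z < x) ∨ (z < y ∧ x < y) ∨ (x < z ∧ y < z) := by grind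
  rcases hlargest with h | h | h
  · refine ⟨0, h, fun i hi ↦ ?_⟩
    fin_cases i
    exacts [rfl, (h.1.asymm hi.2).elim, (h.2.asymm hi.1).elim]
  · refine ⟨1, h, fun i hi ↦ ?_⟩
    fin_cases i
    exacts [(h.2.asymm hi.1).elim, rfl, (h.1.asymm hi.2).elim]
  · refine ⟨2, h, fun i hi ↦ ?_⟩
    fin_cases i
    exacts [(h.1.asymm hi.2).elim, (h.2.asymm hi.1).elim, rfl]

theorem volume_eq_six_mul_volume_inter_decreasingTriples (hS : MeasurableSet S)
    (hrotate : ∀ x y z, (y, z, x) ∈ S ↔ (x, y, z) ∈ S)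
    (hswap : ∀ x y z, (x, z, y) ∈ S ↔ (x, y, z) ∈ S) :
    volume S = 6 * volume (S ∩ decreasingTriples) := by
  have hσ : MeasurePreserving fun p : ℝ × ℝ × ℝ ↦ (p.1, p.2.2, p.2.1) :=
    (MeasurePreserving.id volume).prod Measure.measurePreserving_swap
  have hdecreasing : {p : ℝ × ℝ × ℝ | p.2.1 < p.1 ∧ p.2.2 < p.1} ∩ {p | 0 < p.2.1 - p.2.2} =
      decreasingTriples := by
    ext p
    simp only [decreasingTriples, Set.mem_inter_iff, Set.mem_ofPred_eq, sub_pos]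
    exact ⟨fun h ↦ ⟨h.2, h.1.1⟩, fun h ↦ ⟨⟨h.2, h.1.trans h.2⟩, h.1⟩⟩
  rw [volume_eq_three_mul_volume_inter_fst_largest hS hrotate,
    measure_eq_two_mul_measure_inter_pos (hS.inter (by measurability)) hσ
      (Set.ext fun p ↦ and_congr (hswap _ _ _) and_comm)
      (by fun_prop : Measurable fun p : ℝ × ℝ × ℝ ↦ p.2.1 - p.2.2)
      (fun p ↦ (neg_sub _ _).symm)
      (ae_snd_fst_ne_snd_snd.mono fun p ↦ sub_ne_zero.2),
    Set.inter_assoc, hdecreasing, ← mul_assoc]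
  norm_num

end Coordinates

section Cone

variable {E : Type*} {T : Set E} {r : E → ℝ}

/-- The part below the graph of `r` of the cone over `{1} × T` with apex `0`: the points
`(x, x • q)` with `q ∈ T` and `0 < x ≤ r q`. -/
def truncatedCone [SMul ℝ E] (T : Set E) (r : E → ℝ) : Set (ℝ × E) :=
  {p | 0 < p.1 ∧ p.1⁻¹ • p.2 ∈ T ∧ p.1 ≤ r (p.1⁻¹ • p.2)}

theorem measurableSet_truncatedCone [SMul ℝ E] [MeasurableSpace E] [MeasurableSMul₂ ℝ E]
    (hT : MeasurableSet T) (hr : Measurable r) : MeasurableSet (truncatedCone T r) := by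
  have hscale : Measurable fun p : ℝ × E ↦ p.1⁻¹ • p.2 := by fun_prop
  exact (measurableSet_lt measurable_const measurable_fst).inter
    ((hscale hT).inter (measurableSet_le measurable_fst (hr.comp hscale)))

theorem measure_truncatedCone [NormedAddCommGroup E] [NormedSpace ℝ E] [FiniteDimensional ℝ E]
    [MeasurableSpace E] [BorelSpace E] (μ : Measure E) [μ.IsAddHaarMeasure]
    (hT : MeasurableSet T) (hr : Measurable r) (hr₀ : ∀ q ∈ T, 0 ≤ r q) :
    (volume.prod μ) (truncatedCone T r) =
      (∫⁻ q in T, ENNReal.ofReal (r q ^ (Module.finrank ℝ E + 1)) ∂μ) /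
        (Module.finrank ℝ E + 1 : ℕ) := by
  set d := Module.finrank ℝ E
  have : ProperSpace E := FiniteDimensional.proper ℝ E
  -- The slice at height `x` is `x • {q ∈ T | x ≤ r q}`, so integrating the measures of the slices
  -- gives the layer cake formula for `∫ r ^ (d + 1)`.
  have hslice_nonpos : ∀ x ∉ Set.Ioi (0 : ℝ), μ (Prod.mk x ⁻¹' truncatedCone T r) = 0 :=
    fun x hx ↦ measure_mono_null (fun q hq ↦ hx hq.1) measure_empty
  have hslice_pos : ∀ x ∈ Set.Ioi (0 : ℝ), μ (Prod.mk x ⁻¹' truncatedCone T r) =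
      μ.restrict T {q | x ≤ r q} * ENNReal.ofReal (x ^ ((d + 1 : ℕ) - 1 : ℝ)) := by
    intro x hx
    have hpre : Prod.mk x ⁻¹' truncatedCone T r = (x⁻¹ • ·) ⁻¹' ({q | x ≤ r q} ∩ T) := by
      ext q
      exact ⟨fun h ↦ ⟨h.2.2, h.2.1⟩, fun h ↦ ⟨hx, h.2, h.1⟩⟩
    rw [hpre, Measure.addHaar_preimage_smul μ (inv_ne_zero (ne_of_gt hx)), inv_pow, inv_inv,
      abs_of_pos (pow_pos hx _), Measure.restrict_apply (measurableSet_le measurable_const hr),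
      mul_comm, Nat.cast_succ, add_sub_cancel_right, rpow_natCast]
  have hnonneg : 0 ≤ᵐ[μ.restrict T] r := ae_restrict_of_forall_mem hT hr₀
  have hlayer := lintegral_rpow_eq_lintegral_meas_le_mul (μ.restrict T) hnonneg hr.aemeasurable
    (p := (d + 1 : ℕ)) (Nat.cast_pos.2 d.succ_pos)
  simp only [rpow_natCast, ENNReal.ofReal_natCast] at hlayer
  rw [hlayer, ENNReal.mul_div_right_comm, ENNReal.div_self (by simp) (by simp), one_mul,
    Measure.prod_apply (measurableSet_truncatedCone hT hr),
    ← setLIntegral_eq_of_support_subset (Function.support_subset_iff'.2 hslice_nonpos)]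
  exact setLIntegral_congr_fun measurableSet_Ioi hslice_pos

end Cone

section Integrals

theorem setLIntegral_regionBetween {α : Type*} [MeasurableSpace α] {μ : Measure α} {ν : Measure ℝ}
    [SFinite ν] {f g : α → ℝ} {s : Set α} {F : α × ℝ → ENNReal}
    (hf : Measurable f) (hg : Measurable g) (hs : MeasurableSet s) (hF : Measurable F) :
    ∫⁻ p in regionBetween f g s, F p ∂μ.prod ν =
      ∫⁻ a in s, ∫⁻ b in Set.Ioo (f a) (g a), F (a, b) ∂ν ∂μ := by
  have hregion := measurableSet_regionBetween hf hg hs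
  rw [← lintegral_indicator hregion, lintegral_prod _ (hF.indicator hregion).aemeasurable,
    ← lintegral_indicator hs]
  congr 1 with a
  by_cases ha : a ∈ s
  · simp [ha, regionBetween, ← lintegral_indicator measurableSet_Ioo, Set.indicator]
  · simp [ha, regionBetween, Set.indicator]

theorem setLIntegral_Ioo_ofReal_eq_sub_of_hasDerivAt {f F : ℝ → ℝ} {a b : ℝ} (hab : a ≤ b)
    (hF : ContinuousOn F (Set.Icc a b)) (hderiv : ∀ x ∈ Set.Ioo a b, HasDerivAt F (f x) x)
    (hf : ∀ x ∈ Set.Ioo a b, 0 ≤ f x) :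
    ∫⁻ x in Set.Ioo a b, ENNReal.ofReal (f x) = ENNReal.ofReal (F b - F a) := by
  have hint : IntegrableOn f (Set.Ioc a b) :=
    intervalIntegral.integrableOn_deriv_of_nonneg hF hderiv hf
  rw [← ofReal_integral_eq_lintegral_ofReal (hint.mono_set Set.Ioo_subset_Ioc_self)
      (ae_restrict_of_forall_mem measurableSet_Ioo hf),
    ← integral_Ioc_eq_integral_Ioo, ← intervalIntegral.integral_of_le hab,
    intervalIntegral.integral_eq_sub_of_hasDerivAt_of_le hab hF hderiv
      ((intervalIntegrable_iff_integrableOn_Ioc_of_le hab).2 hint)]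

theorem hasDerivAt_div_mul_sqrt_const_sub_sq {c x : ℝ} (hx : x ^ 2 < c) :
    HasDerivAt (fun x ↦ x / (c * √(c - x ^ 2))) ((√(c - x ^ 2))⁻¹ ^ 3) x := by
  have hpos : 0 < c - x ^ 2 := sub_pos.2 hx
  have hc : 0 < c := (sq_nonneg x).trans_lt hx
  have hsqrt : 0 < √(c - x ^ 2) := sqrt_pos.2 hpos
  have hden := (((hasDerivAt_pow 2 x).const_sub c).sqrt hpos.ne').const_mul c
  refine ((hasDerivAt_id x).div hden (mul_pos hc hsqrt).ne').congr_deriv ?_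
  have hsq : √(c - x ^ 2) ^ 2 = c - x ^ 2 := sq_sqrt hpos.le
  simp only [id]
  field_simp
  grind

theorem setLIntegral_inv_sqrt_const_sub_sq_pow_three {a c : ℝ} (ha : 0 ≤ a) (hac : a ^ 2 < c) :
    ∫⁻ b in Set.Ioo 0 a, ENNReal.ofReal ((√(c - b ^ 2))⁻¹ ^ 3) =
      ENNReal.ofReal (a / (c * √(c - a ^ 2))) := by
  have hderiv : ∀ b ∈ Set.Icc 0 a,
      HasDerivAt (fun b ↦ b / (c * √(c - b ^ 2))) ((√(c - b ^ 2))⁻¹ ^ 3) b := fun b hb ↦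
    hasDerivAt_div_mul_sqrt_const_sub_sq ((pow_le_pow_left₀ hb.1 hb.2 2).trans_lt hac)
  rw [setLIntegral_Ioo_ofReal_eq_sub_of_hasDerivAt ha (HasDerivAt.continuousOn hderiv)
    (fun b hb ↦ hderiv b (Set.Ioo_subset_Icc_self hb)) fun b _ ↦ by positivity]
  simp

theorem setLIntegral_div_one_add_sq {t : ℝ} (ht : 0 ≤ t) :
    ∫⁻ a in Set.Ioo 0 t, ENNReal.ofReal (a / (1 + a ^ 2)) =
      ENNReal.ofReal (log (1 + t ^ 2) / 2) := by
  have hderiv (a : ℝ) : HasDerivAt (fun a ↦ log (1 + a ^ 2) / 2) (a / (1 + a ^ 2)) a := by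
    refine ((((hasDerivAt_pow 2 a).const_add 1).log (by positivity)).div_const 2).congr_deriv ?_
    field_simp
    ring
  rw [setLIntegral_Ioo_ofReal_eq_sub_of_hasDerivAt ht
    (HasDerivAt.continuousOn fun a _ ↦ hderiv a) (fun a _ ↦ hderiv a)
    fun a ha ↦ div_nonneg ha.1.le (by positivity)]
  simp

end Integrals

theorem le_inv_sqrt_iff_sq_mul_le_one {x g : ℝ} (hx : 0 ≤ x) (hg : 0 < g) :
    x ≤ (√g)⁻¹ ↔ x ^ 2 * g ≤ 1 := by
  rw [← one_div, le_div_iff₀ (sqrt_pos.2 hg), ← sq_le_one_iff₀ (by positivity), mul_pow,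
    sq_sqrt hg.le]

/-- The intersection of the three solid hyperboloids. -/
def hyperboloidSolid : Set (ℝ × ℝ × ℝ) :=
  {p | p.1 ^ 2 + p.2.1 ^ 2 - p.2.2 ^ 2 ≤ 1 ∧ p.2.1 ^ 2 + p.2.2 ^ 2 - p.1 ^ 2 ≤ 1 ∧
    p.2.2 ^ 2 + p.1 ^ 2 - p.2.1 ^ 2 ≤ 1}

/-- The part `0 < z < y < x` of the solid, one of the 48 congruent pieces into which the coordinate
planes and the planes `x = ± y`, `y = ± z`, `z = ± x` cut it. -/
def hyperboloidChamber : Set (ℝ × ℝ × ℝ) :=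
  hyperboloidSolid ∩ positiveOctant ∩ decreasingTriples

theorem measurableSet_hyperboloidSolid : MeasurableSet hyperboloidSolid := by
  unfold hyperboloidSolid
  measurability

theorem volume_hyperboloidSolid_eq_mul_volume_hyperboloidChamber :
    volume hyperboloidSolid = 48 * volume hyperboloidChamber := by
  rw [volume_eq_eight_mul_volume_inter_positiveOctant measurableSet_hyperboloidSolid
      (fun x y z ↦ by simp only [hyperboloidSolid, Set.mem_ofPred_eq, sq_abs]),
    volume_eq_six_mul_volume_inter_decreasingTriples
      (measurableSet_hyperboloidSolid.inter measurableSet_positiveOctant), ← mul_assoc]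
  · norm_num [hyperboloidChamber]
  · intro x y z
    simp only [hyperboloidSolid, positiveOctant, Set.mem_inter_iff, Set.mem_ofPred_eq]
    tauto
  · intro x y z
    simp only [hyperboloidSolid, positiveOctant, Set.mem_inter_iff, Set.mem_ofPred_eq, add_comm]
    tauto

theorem mem_hyperboloidSolid_iff_of_pos_of_lt_of_lt {x y z : ℝ} (hz : 0 < z) (hzy : z < y)
    (hyx : y < x) : (x, y, z) ∈ hyperboloidSolid ↔ x ^ 2 + y ^ 2 - z ^ 2 ≤ 1 :=
  ⟨fun h ↦ h.1, fun h ↦ ⟨h, by nlinarith, by nlinarith⟩⟩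

theorem hyperboloidChamber_eq_truncatedCone :
    hyperboloidChamber = truncatedCone (regionBetween 0 id (Set.Ioo 0 1))
      fun q ↦ (√(1 + q.1 ^ 2 - q.2 ^ 2))⁻¹ := by
  ext ⟨x, y, z⟩
  by_cases hx : 0 < x
  swap
  · exact iff_of_false (fun h ↦ hx h.1.2.1) fun h ↦ hx h.1
  obtain ⟨a, rfl⟩ : ∃ a, y = x * a := ⟨x⁻¹ * y, (mul_inv_cancel_left₀ hx.ne' y).symm⟩
  obtain ⟨b, rfl⟩ : ∃ b, z = x * b := ⟨x⁻¹ * z, (mul_inv_cancel_left₀ hx.ne' z).symm⟩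
  have hchamber : (0 < x * a ∧ 0 < x * b) ∧ x * b < x * a ∧ x * a < x ↔
      (0 < a ∧ a < 1) ∧ 0 < b ∧ b < a := by
    rw [mul_pos_iff_of_pos_left hx, mul_pos_iff_of_pos_left hx, mul_lt_mul_iff_right₀ hx,
      mul_lt_iff_lt_one_right hx]
    tauto
  have hsolid (hab : (0 < a ∧ a < 1) ∧ 0 < b ∧ b < a) :
      (x, x * a, x * b) ∈ hyperboloidSolid ↔ x ≤ (√(1 + a ^ 2 - b ^ 2))⁻¹ := by
    obtain ⟨⟨-, hb⟩, hba, hax⟩ := hchamber.2 hab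
    rw [mem_hyperboloidSolid_iff_of_pos_of_lt_of_lt hb hba hax,
      le_inv_sqrt_iff_sq_mul_le_one hx.le (by nlinarith [hab.2.1, hab.2.2])]
    ring_nf
  simp only [hyperboloidChamber, positiveOctant, decreasingTriples, truncatedCone, regionBetween,
    Set.mem_inter_iff, Set.mem_ofPred_eq, Set.mem_Ioo, Prod.smul_mk, smul_eq_mul,
    inv_mul_cancel_left₀ hx.ne', hx, true_and, and_assoc, Pi.zero_apply, id]
  tauto

theorem volume_hyperboloidChamber :
    volume hyperboloidChamber = ENNReal.ofReal (log 2 / 6) := by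
  have hregion : MeasurableSet (regionBetween 0 id (Set.Ioo (0 : ℝ) 1)) :=
    measurableSet_regionBetween measurable_zero measurable_id measurableSet_Ioo
  have hinner : ∀ a ∈ Set.Ioo (0 : ℝ) 1,
      ∫⁻ b in Set.Ioo 0 a, ENNReal.ofReal ((√(1 + a ^ 2 - b ^ 2))⁻¹ ^ 3) =
        ENNReal.ofReal (a / (1 + a ^ 2)) := fun a ha ↦ by
    simpa using setLIntegral_inv_sqrt_const_sub_sq_pow_three ha.1.le (lt_one_add (a ^ 2))
  rw [hyperboloidChamber_eq_truncatedCone]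
  calc (volume.prod (volume : Measure (ℝ × ℝ))) (truncatedCone (regionBetween 0 id (Set.Ioo 0 1))
        fun q ↦ (√(1 + q.1 ^ 2 - q.2 ^ 2))⁻¹)
      = (∫⁻ q in regionBetween 0 id (Set.Ioo 0 1),
          ENNReal.ofReal ((√(1 + q.1 ^ 2 - q.2 ^ 2))⁻¹ ^ 3)) / 3 := by
        rw [measure_truncatedCone volume hregion (by fun_prop) fun q _ ↦ by positivity]
        simp
    _ = (∫⁻ a in Set.Ioo (0 : ℝ) 1, ∫⁻ b in Set.Ioo 0 a,
          ENNReal.ofReal ((√(1 + a ^ 2 - b ^ 2))⁻¹ ^ 3)) / 3 := by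
        rw [Measure.volume_eq_prod, setLIntegral_regionBetween measurable_zero measurable_id
          measurableSet_Ioo (by fun_prop)]
        rfl
    _ = (∫⁻ a in Set.Ioo (0 : ℝ) 1, ENNReal.ofReal (a / (1 + a ^ 2))) / 3 := by
        rw [setLIntegral_congr_fun measurableSet_Ioo hinner]
    _ = ENNReal.ofReal (log 2 / 6) := by
        rw [setLIntegral_div_one_add_sq zero_le_one, ← ENNReal.ofReal_ofNat,
          ← ENNReal.ofReal_div_of_pos (by norm_num)]
        ring_nf

theorem volume_hyperboloid_solid :
    volume {p : ℝ × ℝ × ℝ |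
        p.1 ^ 2 + p.2.1 ^ 2 - p.2.2 ^ 2 ≤ 1 ∧
        p.2.1 ^ 2 + p.2.2 ^ 2 - p.1 ^ 2 ≤ 1 ∧
        p.2.2 ^ 2 + p.1 ^ 2 - p.2.1 ^ 2 ≤ 1} = ENNReal.ofReal (Real.log 256) := by
  have hlog : log 256 = 48 * (log 2 / 6) := by
    rw [show (256 : ℝ) = 2 ^ 8 by norm_num, log_pow]
    push_cast
    ring
  calc volume hyperboloidSolid
      = 48 * volume hyperboloidChamber := volume_hyperboloidSolid_eq_mul_volume_hyperboloidChamber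
    _ = 48 * ENNReal.ofReal (log 2 / 6) := by rw [volume_hyperboloidChamber]
    _ = ENNReal.ofReal (log 256) := by
        rw [hlog, ENNReal.ofReal_mul (by norm_num), ENNReal.ofReal_ofNat]
end

section
/- The Lebesgue volume of the first-octant piece R₁ = {(x,y,z) ∈ ℝ³ : x ≥ 0, y ≥ 0, z ≥ 0, x² + y² − z² ≤ 1, y² + z² − x² ≤ 1, z² + x² − y² ≤ 1} is equal to log 2. -/
open MeasureTheory Real

/-!
Since `x² + y² - z² = |p|² - 2z²`, the piece is invariant under permutations of the coordinates, so
its volume is six times that of its part in the chamber `z < y < x`, where the inequality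
`x² + y² - z² ≤ 1` implies the other two. In the slope coordinates `t = y / x`, `s = z / x`, whose
Jacobian is `x²`, this part is given by `0 ≤ s < t < 1` and `x ≤ (1 + t² - s²) ^ (-1 / 2)`, so its
volume is one third of
`∫₀¹ ∫₀ᵗ (1 + t² - s²) ^ (-3 / 2) ds dt = ∫₀¹ t / (1 + t²) dt = log 2 / 2`.
-/

section Chamber

open DomMulAct
open scoped Nat Pointwise

variable {ι : Type*} [Fintype ι]

lemma smulInvariantMeasure_perm_pi {α : Type*} [MeasurableSpace α] (μ : Measure α) [SigmaFinite μ] :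
    SMulInvariantMeasure (Equiv.Perm ι)ᵈᵐᵃ (ι → α) (Measure.pi fun _ => μ) where
  measure_preimage_smul σ _ hs :=
    (measurePreserving_arrowCongr' (fun _ : ι => μ) (fun _ => μ) (mk.symm σ).symm (.refl α)
      fun _ => .id μ).measure_preimage hs.nullMeasurableSet

lemma ae_injective_pi_real : ∀ᵐ x : ι → ℝ, Function.Injective x := by
  classical
  have hne (i j : ι) (hij : i ≠ j) : ∀ᵐ x : ι → ℝ, x i ≠ x j := by
    let H : Submodule ℝ (ι → ℝ) := LinearMap.eqLocus (LinearMap.proj i) (LinearMap.proj j)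
    have hH : H ≠ ⊤ := fun h => by
      have : Pi.single i (1 : ℝ) ∈ H := h ▸ Submodule.mem_top
      simp [H, hij.symm] at this
    have hnull : volume (H : Set (ι → ℝ)) = 0 := Measure.addHaar_submodule volume H hH
    filter_upwards [measure_eq_zero_iff_ae_notMem.1 hnull] with x hx h
    exact hx (by simp [H, h])
  filter_upwards [ae_all_iff.2 fun i => ae_all_iff.2 fun j => ae_all_iff.2 (hne i j)]
    with x hx i j h
  by_contra hij
  exact hx i j hij h

lemma measurableSet_strictAnti_pi (n : ℕ) : MeasurableSet {x : Fin n → ℝ | StrictAnti x} := by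
  simp only [StrictAnti]
  measurability

lemma isFundamentalDomain_strictAnti (n : ℕ) :
    IsFundamentalDomain (Equiv.Perm (Fin n))ᵈᵐᵃ {x : Fin n → ℝ | StrictAnti x} where
  nullMeasurableSet := (measurableSet_strictAnti_pi n).nullMeasurableSet
  ae_covers := by
    filter_upwards [ae_injective_pi_real] with x hx
    let σ := Tuple.sort (OrderDual.toDual ∘ x)
    have hanti : Antitone (x ∘ σ) := Tuple.monotone_sort (OrderDual.toDual ∘ x)
    exact ⟨mk σ, hanti.strictAnti_of_injective (hx.comp σ.injective)⟩
  aedisjoint g h hgh := by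
    refine (Set.disjoint_left.2 fun x hxg hxh => hgh ?_).aedisjoint
    rw [Set.mem_smul_set_iff_inv_smul_mem] at hxg hxh
    have hx : Function.Injective x := (mk.symm g⁻¹).injective_comp x |>.1 hxg.injective
    have hperm : x ∘ ⇑(mk.symm g⁻¹) = x ∘ ⇑(mk.symm h⁻¹) :=
      Tuple.unique_antitone hxg.antitone hxh.antitone
    exact inv_injective (mk.symm.injective (Equiv.ext fun i => hx (congrFun hperm i)))

lemma volume_eq_factorial_mul_strictAnti {n : ℕ} {A : Set (Fin n → ℝ)}
    (hA : ∀ x ∈ A, ∀ σ : Equiv.Perm (Fin n), x ∘ σ ∈ A) :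
    volume A = n ! * volume (A ∩ {x | StrictAnti x}) := by
  have : SMulInvariantMeasure (Equiv.Perm (Fin n))ᵈᵐᵃ (Fin n → ℝ) volume :=
    smulInvariantMeasure_perm_pi volume
  have : MeasurableConstSMul (Equiv.Perm (Fin n))ᵈᵐᵃ (Fin n → ℝ) :=
    ⟨fun g => measurable_pi_lambda _ fun i => measurable_pi_apply (mk.symm g i)⟩
  have : Finite (Equiv.Perm (Fin n))ᵈᵐᵃ := .of_equiv _ mk
  have hinv (g : (Equiv.Perm (Fin n))ᵈᵐᵃ) : g • A = A := by
    ext x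
    rw [Set.mem_smul_set_iff_inv_smul_mem]
    exact ⟨fun hx => smul_inv_smul g x ▸ hA _ hx (mk.symm g), fun hx => hA x hx _⟩
  rw [(isFundamentalDomain_strictAnti n).measure_eq_card_smul_of_smul_ae_eq_self A
    fun g => .of_eq (hinv g), ← Nat.card_congr mk, Nat.card_perm, Nat.card_fin, nsmul_eq_mul]

lemma volume_preserving_finThreeArrow :
    MeasurePreserving (fun x : Fin 3 → ℝ => (x 0, x 1, x 2)) :=
  ((MeasurePreserving.id volume).prod (volume_preserving_finTwoArrow ℝ)).comp
    (volume_preserving_piFinSuccAbove (fun _ => ℝ) 0)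

end Chamber

section SlopeCoordinates

open Module

variable {E : Type*} [NormedAddCommGroup E] [NormedSpace ℝ E] [FiniteDimensional ℝ E]
  [MeasurableSpace E] [BorelSpace E] (μ : Measure E) [μ.IsAddHaarMeasure]

lemma measure_eq_mul_measure_preimage_smul {r : ℝ} (hr : 0 < r) (s : Set E) :
    μ s = ENNReal.ofReal (r ^ finrank ℝ E) * μ ((r • ·) ⁻¹' s) := by
  rw [Measure.addHaar_preimage_smul μ hr.ne', abs_of_pos (by positivity), ← mul_assoc,
    ← ENNReal.ofReal_mul (by positivity), mul_inv_cancel₀ (by positivity), ENNReal.ofReal_one,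
    one_mul]

lemma volume_prod_eq_lintegral_slope {A : Set (ℝ × E)} (hA : MeasurableSet A)
    (hpos : ∀ p ∈ A, 0 < p.1) :
    (volume.prod μ) A =
      ∫⁻ v, (∫⁻ x in {x : ℝ | (x, x • v) ∈ A}, ENNReal.ofReal (x ^ finrank ℝ E)) ∂μ := by
  let B : Set (ℝ × E) := {q | (q.1, q.1 • q.2) ∈ A}
  have hB : MeasurableSet B := (measurable_fst.prodMk (measurable_fst.smul measurable_snd)) hA
  let J : ℝ × E → ENNReal := B.indicator fun q => ENNReal.ofReal (q.1 ^ finrank ℝ E)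
  have hJ : Measurable J := (by fun_prop : Measurable _).indicator hB
  have hslice (x : ℝ) : μ (Prod.mk x ⁻¹' A) = ∫⁻ v, J (x, v) ∂μ := by
    have hJx : ∫⁻ v, J (x, v) ∂μ =
        ENNReal.ofReal (x ^ finrank ℝ E) * μ ((x • ·) ⁻¹' (Prod.mk x ⁻¹' A)) := by
      change _ = _ * μ (Prod.mk x ⁻¹' B)
      rw [← lintegral_indicator_const (measurable_prodMk_left hB)]
      rfl
    rcases lt_or_ge 0 x with hx | hx
    · rw [hJx, ← measure_eq_mul_measure_preimage_smul μ hx]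
    · have hempty : Prod.mk x ⁻¹' A = ∅ :=
        Set.eq_empty_of_forall_notMem fun v hv => (hpos _ hv).not_ge hx
      rw [hJx, hempty, Set.preimage_empty, measure_empty, mul_zero]
  calc (volume.prod μ) A = ∫⁻ x, ∫⁻ v, J (x, v) ∂μ := by
        rw [Measure.prod_apply hA, lintegral_congr hslice]
    _ = ∫⁻ v, (∫⁻ x, J (x, v)) ∂μ := lintegral_lintegral_swap hJ.aemeasurable
    _ = _ := lintegral_congr fun v => lintegral_indicator (measurable_prodMk_right hB) _

end SlopeCoordinates

section Integrals

lemma setLIntegral_Ioo_ofReal_of_hasDerivAt {F f : ℝ → ℝ} {a b : ℝ} (hab : a ≤ b)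
    (hF : ContinuousOn F (Set.Icc a b)) (hderiv : ∀ x ∈ Set.Ioo a b, HasDerivAt F (f x) x)
    (hf : ∀ x ∈ Set.Ioo a b, 0 ≤ f x) :
    ∫⁻ x in Set.Ioo a b, ENNReal.ofReal (f x) = ENNReal.ofReal (F b - F a) := by
  have hint := intervalIntegral.integrableOn_deriv_of_nonneg hF hderiv hf
  rw [← ofReal_integral_eq_lintegral_ofReal (hint.mono_set Set.Ioo_subset_Ioc_self)
      (ae_restrict_of_forall_mem measurableSet_Ioo hf),
    ← integral_Ioc_eq_integral_Ioo, ← intervalIntegral.integral_of_le hab,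
    intervalIntegral.integral_eq_sub_of_hasDerivAt_of_le hab hF hderiv
      ((intervalIntegrable_iff_integrableOn_Ioc_of_le hab).2 hint)]

lemma setLIntegral_Ioc_zero_pow (n : ℕ) {r : ℝ} (hr : 0 ≤ r) :
    ∫⁻ x in Set.Ioc 0 r, ENNReal.ofReal (x ^ n) = ENNReal.ofReal (r ^ (n + 1) / (n + 1)) := by
  rw [← restrict_Ioo_eq_restrict_Ioc, setLIntegral_Ioo_ofReal_of_hasDerivAt hr
    (F := fun x => x ^ (n + 1) / (n + 1)) (by fun_prop) (fun x _ => ?_)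
    (fun x hx => pow_nonneg hx.1.le n)]
  · simp
  · refine ((hasDerivAt_pow (n + 1) x).div_const _).congr_deriv ?_
    push_cast
    field_simp

lemma hasDerivAt_div_mul_sqrt_sub_sq {c s : ℝ} (hs : s ^ 2 < c) :
    HasDerivAt (fun s => s / (c * √(c - s ^ 2))) (√(c - s ^ 2)⁻¹ ^ 3) s := by
  have hc : 0 < c := (sq_nonneg s).trans_lt hs
  have hpos : 0 < c - s ^ 2 := sub_pos.2 hs
  have hr : 0 < √(c - s ^ 2) := sqrt_pos.2 hpos
  have hsqrt := (((hasDerivAt_id s).pow 2).const_sub c).sqrt hpos.ne'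
  refine ((hasDerivAt_id s).div (hsqrt.const_mul c) (by positivity)).congr_deriv ?_
  have hsq : √(c - s ^ 2) ^ 2 = c - s ^ 2 := sq_sqrt hpos.le
  simp only [id, Pi.pow_apply, sqrt_inv]
  generalize √(c - s ^ 2) = r at *
  obtain rfl : c = r ^ 2 + s ^ 2 := by linarith
  field_simp
  ring

lemma setLIntegral_Ico_sqrt_inv_cube {c t : ℝ} (ht : 0 ≤ t) (htc : t ^ 2 < c) :
    ∫⁻ s in Set.Ico 0 t, ENNReal.ofReal (√(c - s ^ 2)⁻¹ ^ 3) =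
      ENNReal.ofReal (t / (c * √(c - t ^ 2))) := by
  have hderiv {s : ℝ} (hs : s ∈ Set.Icc 0 t) :=
    hasDerivAt_div_mul_sqrt_sub_sq ((pow_le_pow_left₀ hs.1 hs.2 2).trans_lt htc)
  rw [← restrict_Ioo_eq_restrict_Ico, setLIntegral_Ioo_ofReal_of_hasDerivAt ht
    (fun s hs => (hderiv hs).continuousAt.continuousWithinAt)
    (fun s hs => hderiv (Set.Ioo_subset_Icc_self hs)) (fun s _ => by positivity),
    zero_div, sub_zero]

lemma setLIntegral_Ioo_div_one_add_sq {a : ℝ} (ha : 0 ≤ a) :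
    ∫⁻ t in Set.Ioo 0 a, ENNReal.ofReal (t / (1 + t ^ 2)) =
      ENNReal.ofReal (log (1 + a ^ 2) / 2) := by
  have hderiv (t : ℝ) : HasDerivAt (fun t => log (1 + t ^ 2) / 2) (t / (1 + t ^ 2)) t := by
    refine ((((hasDerivAt_pow 2 t).const_add 1).log (by positivity)).div_const 2).congr_deriv ?_
    push_cast
    field_simp
  rw [setLIntegral_Ioo_ofReal_of_hasDerivAt ha
    (fun t _ => (hderiv t).continuousAt.continuousWithinAt) (fun t _ => hderiv t)
    (fun t ht => div_nonneg ht.1.le (by positivity))]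
  simp

end Integrals

/-- The analogue of the first-octant piece for an arbitrary number of coordinates. Writing
`x² + y² - z²` as `|x|² - 2 xᵢ²` makes the invariance under permutations visible. -/
def orthantPiece (ι : Type*) [Fintype ι] : Set (ι → ℝ) :=
  {x | ∀ i, 0 ≤ x i ∧ ∑ j, x j ^ 2 - 2 * x i ^ 2 ≤ 1}

/-- The part of the first-octant piece in the chamber `z < y < x`, described by the only one of the
three quadratic inequalities that matters there. -/
def chamberPiece : Set (ℝ × ℝ × ℝ) :=
  {p | 0 ≤ p.2.2 ∧ p.2.2 < p.2.1 ∧ p.2.1 < p.1 ∧ p.1 ^ 2 + p.2.1 ^ 2 - p.2.2 ^ 2 ≤ 1}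

/-- The set of slopes `(t, s) = (y / x, z / x)` of the points of the chamber `0 ≤ z < y < x`. -/
def slopeTriangle : Set (ℝ × ℝ) :=
  {v | v.1 ∈ Set.Ioo 0 1 ∧ v.2 ∈ Set.Ico 0 v.1}

lemma comp_perm_mem_orthantPiece {ι : Type*} [Fintype ι] {x : ι → ℝ} (hx : x ∈ orthantPiece ι)
    (σ : Equiv.Perm ι) : x ∘ σ ∈ orthantPiece ι := fun i => by
  simpa only [Function.comp_apply, Equiv.sum_comp σ fun j => x j ^ 2] using hx (σ i)

lemma mem_orthantPiece_fin_three {x : Fin 3 → ℝ} :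
    x ∈ orthantPiece (Fin 3) ↔ 0 ≤ x 0 ∧ 0 ≤ x 1 ∧ 0 ≤ x 2 ∧
      x 0 ^ 2 + x 1 ^ 2 - x 2 ^ 2 ≤ 1 ∧
      x 1 ^ 2 + x 2 ^ 2 - x 0 ^ 2 ≤ 1 ∧
      x 2 ^ 2 + x 0 ^ 2 - x 1 ^ 2 ≤ 1 := by
  simp only [orthantPiece, Set.mem_ofPred_eq, Fin.sum_univ_three]
  constructor
  · intro h
    exact ⟨(h 0).1, (h 1).1, (h 2).1, by linarith [h 2], by linarith [h 0], by linarith [h 1]⟩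
  · rintro ⟨h0, h1, h2, hq2, hq0, hq1⟩ i
    match i with
    | 0 => exact ⟨h0, by linarith⟩
    | 1 => exact ⟨h1, by linarith⟩
    | 2 => exact ⟨h2, by linarith⟩

lemma orthantPiece_inter_strictAnti :
    orthantPiece (Fin 3) ∩ {x | StrictAnti x} = (fun x => (x 0, x 1, x 2)) ⁻¹' chamberPiece := by
  ext x
  have hanti : StrictAnti x ↔ x 1 < x 0 ∧ x 2 < x 1 := by
    simp [Fin.strictAnti_iff_succ_lt, Fin.forall_fin_two]
  simp only [Set.mem_inter_iff, mem_orthantPiece_fin_three, Set.mem_ofPred_eq, hanti, chamberPiece,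
    Set.mem_preimage]
  constructor
  · rintro ⟨⟨-, -, h2, hq, -, -⟩, h10, h21⟩
    exact ⟨h2, h21, h10, hq⟩
  · rintro ⟨h2, h21, h10, hq⟩
    have h1 : 0 ≤ x 1 := h2.trans h21.le
    have hsq21 : x 2 ^ 2 ≤ x 1 ^ 2 := pow_le_pow_left₀ h2 h21.le 2
    have hsq10 : x 1 ^ 2 ≤ x 0 ^ 2 := pow_le_pow_left₀ h1 h10.le 2
    exact ⟨⟨h1.trans h10.le, h1, h2, hq, by linarith, by linarith⟩, h10, h21⟩

lemma measurableSet_chamberPiece : MeasurableSet chamberPiece := by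
  unfold chamberPiece
  measurability

lemma measurableSet_slopeTriangle : MeasurableSet slopeTriangle := by
  unfold slopeTriangle
  simp only [Set.mem_Ioo, Set.mem_Ico]
  measurability

lemma chamberPiece_fst_pos {p : ℝ × ℝ × ℝ} (hp : p ∈ chamberPiece) : 0 < p.1 := by
  obtain ⟨hz, hzy, hyx, -⟩ := hp
  linarith

lemma mk_smul_mem_chamberPiece_iff {x : ℝ} {v : ℝ × ℝ} :
    (x, x • v) ∈ chamberPiece ↔
      v ∈ slopeTriangle ∧ x ∈ Set.Ioc 0 √(1 + v.1 ^ 2 - v.2 ^ 2)⁻¹ := by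
  by_cases hx : 0 < x
  · simp only [chamberPiece, slopeTriangle, Set.mem_ofPred_eq, Prod.smul_fst, Prod.smul_snd,
      smul_eq_mul, Set.mem_Ioo, Set.mem_Ico, Set.mem_Ioc, hx, true_and, mul_nonneg_iff_of_pos_left,
      mul_lt_mul_iff_right₀, mul_lt_iff_lt_one_right]
    have hquad (h0 : 0 ≤ v.2) (h1 : v.2 < v.1) :
        x ^ 2 + (x * v.1) ^ 2 - (x * v.2) ^ 2 ≤ 1 ↔ x ≤ √(1 + v.1 ^ 2 - v.2 ^ 2)⁻¹ := by
      have hpos : 0 < 1 + v.1 ^ 2 - v.2 ^ 2 := by nlinarith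
      rw [le_sqrt' hx, ← one_div, le_div_iff₀ hpos]
      ring_nf
    constructor
    · rintro ⟨h0, h1, h2, hq⟩
      exact ⟨⟨⟨h0.trans_lt h1, h2⟩, h0, h1⟩, (hquad h0 h1).1 hq⟩
    · rintro ⟨⟨⟨-, h2⟩, h0, h1⟩, hq⟩
      exact ⟨h0, h1, h2, (hquad h0 h1).2 hq⟩
  · exact ⟨fun h => (hx (chamberPiece_fst_pos h)).elim, fun h => (hx h.2.1).elim⟩

lemma setLIntegral_slopeTriangle {f : ℝ × ℝ → ENNReal} (hf : Measurable f) :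
    ∫⁻ v in slopeTriangle, f v = ∫⁻ t in Set.Ioo 0 1, ∫⁻ s in Set.Ico 0 t, f (t, s) := by
  rw [← lintegral_indicator measurableSet_slopeTriangle, Measure.volume_eq_prod,
    lintegral_prod _ (hf.indicator measurableSet_slopeTriangle).aemeasurable,
    ← lintegral_indicator measurableSet_Ioo]
  refine lintegral_congr fun t => ?_
  by_cases ht : t ∈ Set.Ioo 0 1
  · rw [Set.indicator_of_mem ht, ← lintegral_indicator measurableSet_Ico]
    simp only [Set.indicator_apply, slopeTriangle, Set.mem_ofPred_eq, ht, true_and]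
  · simp only [Set.indicator_apply, slopeTriangle, Set.mem_ofPred_eq, ht, false_and, if_false,
      lintegral_zero]

lemma volume_chamberPiece_eq_lintegral :
    volume chamberPiece =
      3⁻¹ * ∫⁻ v in slopeTriangle, ENNReal.ofReal (√(1 + v.1 ^ 2 - v.2 ^ 2)⁻¹ ^ 3) := by
  rw [Measure.volume_eq_prod, volume_prod_eq_lintegral_slope volume measurableSet_chamberPiece
    fun p => chamberPiece_fst_pos, ← lintegral_const_mul _ (by fun_prop),
    ← lintegral_indicator measurableSet_slopeTriangle]
  refine lintegral_congr fun v => ?_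
  simp only [mk_smul_mem_chamberPiece_iff, Module.finrank_prod, Module.finrank_self]
  by_cases hv : v ∈ slopeTriangle
  · simp only [hv, true_and, Set.indicator_of_mem]
    refine (setLIntegral_Ioc_zero_pow 2 (sqrt_nonneg _)).trans ?_
    rw [ENNReal.ofReal_div_of_pos (by positivity), ENNReal.div_eq_inv_mul]
    norm_num
  · simp only [hv, false_and, not_false_eq_true, Set.indicator_of_notMem]
    simp

lemma volume_chamberPiece : volume chamberPiece = ENNReal.ofReal (log 2 / 6) := by
  have hinner (t : ℝ) (ht : t ∈ Set.Ioo (0 : ℝ) 1) :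
      ∫⁻ s in Set.Ico 0 t, ENNReal.ofReal (√(1 + t ^ 2 - s ^ 2)⁻¹ ^ 3) =
        ENNReal.ofReal (t / (1 + t ^ 2)) := by
    rw [setLIntegral_Ico_sqrt_inv_cube ht.1.le (lt_one_add _), add_sub_cancel_right, sqrt_one,
      mul_one]
  rw [volume_chamberPiece_eq_lintegral, setLIntegral_slopeTriangle (by fun_prop),
    setLIntegral_congr_fun measurableSet_Ioo hinner, setLIntegral_Ioo_div_one_add_sq zero_le_one,
    ← ENNReal.ofReal_ofNat 3, ← ENNReal.ofReal_inv_of_pos three_pos,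
    ← ENNReal.ofReal_mul (by positivity)]
  congr 1
  ring_nf

theorem volume_first_octant_piece :
    volume {p : ℝ × ℝ × ℝ |
        0 ≤ p.1 ∧ 0 ≤ p.2.1 ∧ 0 ≤ p.2.2 ∧
        p.1 ^ 2 + p.2.1 ^ 2 - p.2.2 ^ 2 ≤ 1 ∧
        p.2.1 ^ 2 + p.2.2 ^ 2 - p.1 ^ 2 ≤ 1 ∧
        p.2.2 ^ 2 + p.1 ^ 2 - p.2.1 ^ 2 ≤ 1} = ENNReal.ofReal (Real.log 2) := by
  set R₁ : Set (ℝ × ℝ × ℝ) := {p | _}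
  have hmeas : MeasurableSet R₁ := by measurability
  have hpre : (fun x => (x 0, x 1, x 2)) ⁻¹' R₁ = orthantPiece (Fin 3) :=
    Set.ext fun _ => mem_orthantPiece_fin_three.symm
  calc volume R₁ = volume (orthantPiece (Fin 3)) := by
        rw [← hpre, volume_preserving_finThreeArrow.measure_preimage hmeas.nullMeasurableSet]
    _ = 6 * volume (orthantPiece (Fin 3) ∩ {x | StrictAnti x}) :=
        mod_cast volume_eq_factorial_mul_strictAnti fun _ => comp_perm_mem_orthantPiece
    _ = 6 * volume chamberPiece := by
        rw [orthantPiece_inter_strictAnti, volume_preserving_finThreeArrow.measure_preimage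
          measurableSet_chamberPiece.nullMeasurableSet]
    _ = ENNReal.ofReal (log 2) := by
        rw [volume_chamberPiece, ← ENNReal.ofReal_ofNat 6, ← ENNReal.ofReal_mul (by norm_num),
          mul_div_cancel₀ _ (by norm_num)]
end

section
/- The Lebesgue volume of the curved solid S₂ = {(x,y,z) ∈ ℝ³ : 0 ≤ y ≤ x ≤ 1, 1 − x + y ≤ z ≤ √(1 + y² − x²)} is equal to (log 2)/3 − 1/6. -/
open MeasureTheory Real

/-!
Slice the solid by the planes `y = const`. The plane and the hyperboloid cut such a slice down to
the segment of the disc `x² + z² ≤ 1 + y²` beyond the chord `x + z = 1 + y`, whose endpoints are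
`(1, y)` and `(y, 1)`. The chord subtends the angle `π / 2 - 2 arctan y` at the centre, so the
segment has area `(1 + y²) (π / 4 - arctan y) - (1 - y²) / 2`. Integrating by parts in
`y ∈ [0, 1]` turns `arctan` into the rational function `(y + y³ / 3) / (1 + y²)`, the source
of `log 2 / 3`.
-/

section Slicing

open Set

variable {α β γ : Type*} [MeasurableSpace α] [MeasurableSpace β] [MeasurableSpace γ]

theorem prod_prod_apply_eq_lintegral_middle {μ : Measure α} {ν : Measure β} {τ : Measure γ}
    [SFinite μ] [SFinite ν] [SFinite τ] {s : Set (α × β × γ)} (hs : MeasurableSet s) :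
    μ.prod (ν.prod τ) s = ∫⁻ y, μ.prod τ {q | (q.1, y, q.2) ∈ s} ∂ν := by
  have hslice : Measurable fun p : α × β => τ {z | (p.1, p.2, z) ∈ s} :=
    measurable_measure_prodMk_left (MeasurableEquiv.prodAssoc.measurable hs)
  calc μ.prod (ν.prod τ) s
      = ∫⁻ x, ∫⁻ y, τ {z | (x, y, z) ∈ s} ∂ν ∂μ := by
        rw [Measure.prod_apply hs]
        exact lintegral_congr fun x => Measure.prod_apply (measurable_prodMk_left hs)
    _ = ∫⁻ y, ∫⁻ x, τ {z | (x, y, z) ∈ s} ∂μ ∂ν :=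
        lintegral_lintegral_swap hslice.aemeasurable
    _ = ∫⁻ y, μ.prod τ {q | (q.1, y, q.2) ∈ s} ∂ν := by
        refine lintegral_congr fun y => ?_
        have hinsert : Measurable fun q : α × γ => (q.1, y, q.2) := by fun_prop
        exact (Measure.prod_apply (hinsert hs)).symm

theorem volume_region_between_cc_eq_lintegral {μ : Measure α} {f g : α → ℝ} {s : Set α}
    (hf : Measurable f) (hg : Measurable g) (hs : MeasurableSet s) :
    μ.prod volume {p : α × ℝ | p.1 ∈ s ∧ p.2 ∈ Icc (f p.1) (g p.1)} =
      ∫⁻ x in s, ENNReal.ofReal (g x - f x) ∂μ := by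
  rw [Measure.prod_apply (measurableSet_region_between_cc hf hg hs),
    ← setLIntegral_eq_of_support_subset (s := s)]
  · refine setLIntegral_congr_fun hs fun x hx => ?_
    simp only [preimage_ofPred_eq, hx, true_and, ofPred_mem_eq, Real.volume_Icc]
  · refine Function.support_subset_iff'.2 fun x hx => ?_
    simp only [preimage_ofPred_eq, hx, false_and, ofPred_false, measure_empty]

theorem setLIntegral_Icc_ofReal_eq_ofReal_integral {μ : Measure ℝ} [NullSingletonClass μ]
    {f : ℝ → ℝ} {a b : ℝ} (hab : a ≤ b) (hf : IntervalIntegrable f μ a b)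
    (hf₀ : ∀ x ∈ Icc a b, 0 ≤ f x) :
    ∫⁻ x in Icc a b, ENNReal.ofReal (f x) ∂μ = ENNReal.ofReal (∫ x in a..b, f x ∂μ) := by
  rw [intervalIntegral.integral_of_le hab, ← integral_Icc_eq_integral_Ioc,
    ofReal_integral_eq_lintegral_ofReal]
  · exact (intervalIntegrable_iff_integrableOn_Icc_of_le hab).1 hf
  · exact ae_restrict_of_forall_mem measurableSet_Icc hf₀

theorem volume_region_between_cc_eq_ofReal_integral {μ : Measure ℝ} [NullSingletonClass μ]
    {f g : ℝ → ℝ} {a b : ℝ} (hab : a ≤ b) (hf : Measurable f) (hg : Measurable g)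
    (hgf : IntervalIntegrable (fun x => g x - f x) μ a b) (hfg : ∀ x ∈ Icc a b, f x ≤ g x) :
    μ.prod volume {p : ℝ × ℝ | p.1 ∈ Icc a b ∧ p.2 ∈ Icc (f p.1) (g p.1)} =
      ENNReal.ofReal (∫ x in a..b, (g x - f x) ∂μ) := by
  rw [volume_region_between_cc_eq_lintegral hf hg measurableSet_Icc]
  exact setLIntegral_Icc_ofReal_eq_ofReal_integral hab hgf fun x hx => sub_nonneg.2 (hfg x hx)

end Slicing

theorem hasDerivAt_half_mul_sqrt_sub_sq_add_arcsin {c x : ℝ} (hx : x ^ 2 < c) :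
    HasDerivAt (fun x => (x * √(c - x ^ 2) + c * arcsin (x / √c)) / 2) (√(c - x ^ 2)) x := by
  have hc : 0 < c := (sq_nonneg x).trans_lt hx
  have hcx : 0 < c - x ^ 2 := sub_pos.2 hx
  obtain ⟨hlower, hupper⟩ : -1 < x / √c ∧ x / √c < 1 := by
    rw [lt_div_iff₀ (sqrt_pos.2 hc), div_lt_one (sqrt_pos.2 hc), neg_one_mul]
    exact Real.sq_lt.1 hx
  have hsqrt : HasDerivAt (fun x => √(c - x ^ 2)) (-(2 * x) / (2 * √(c - x ^ 2))) x :=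
    .sqrt (by simpa using (hasDerivAt_pow 2 x).const_sub c) hcx.ne'
  have harcsin : HasDerivAt (fun x => arcsin (x / √c)) (1 / √(c - x ^ 2)) x := by
    have hscale : √(1 - (x / √c) ^ 2) = √(c - x ^ 2) / √c := by
      rw [← sqrt_div hcx.le, div_pow, sq_sqrt hc.le, sub_div, div_self hc.ne']
    refine ((hasDerivAt_arcsin hlower.ne' hupper.ne).comp x
      ((hasDerivAt_id x).div_const (√c))).congr_deriv ?_
    rw [hscale]
    field_simp
  refine ((((hasDerivAt_id x).mul hsqrt).add (harcsin.const_mul c)).div_const 2).congr_deriv ?_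
  have hsq : √(c - x ^ 2) ^ 2 = c - x ^ 2 := sq_sqrt hcx.le
  simp only [id]
  field_simp
  linarith

theorem integral_sqrt_sub_sq {a b c : ℝ} (ha : a ^ 2 ≤ c) (hb : b ^ 2 ≤ c) :
    ∫ x in a..b, √(c - x ^ 2) =
      (b * √(c - b ^ 2) + c * arcsin (b / √c)) / 2 -
        (a * √(c - a ^ 2) + c * arcsin (a / √c)) / 2 := by
  refine intervalIntegral.integral_eq_sub_of_hasDeriv_right
    (f := fun x => (x * √(c - x ^ 2) + c * arcsin (x / √c)) / 2)
    (Continuous.continuousOn (by fun_prop)) (fun x hx => ?_)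
    (Continuous.intervalIntegrable (by fun_prop) a b)
  refine (hasDerivAt_half_mul_sqrt_sub_sq_add_arcsin (Real.sq_lt.2 ?_)).hasDerivWithinAt
  have ha' := abs_le.1 (abs_le_sqrt ha)
  have hb' := abs_le.1 (abs_le_sqrt hb)
  exact ⟨(le_min ha'.1 hb'.1).trans_lt hx.1, hx.2.trans_le (max_le ha'.2 hb'.2)⟩

theorem one_sub_add_le_sqrt {x y : ℝ} (hyx : y ≤ x) (hx : x ≤ 1) :
    1 - x + y ≤ √(1 + y ^ 2 - x ^ 2) :=
  Real.le_sqrt_of_sq_le (by nlinarith [mul_nonneg (sub_nonneg.2 hx) (sub_nonneg.2 hyx)])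

/-- For `0 ≤ y ≤ 1`, the area of the segment cut from the disc of radius `√(1 + y²)` by the chord
joining `(1, y)` to `(y, 1)`: a sector of angle `π / 2 - 2 arctan y` minus a triangle. -/
noncomputable def segmentArea (y : ℝ) : ℝ :=
  (1 + y ^ 2) * (π / 4 - arctan y) - (1 - y ^ 2) / 2

theorem continuous_segmentArea : Continuous segmentArea := by
  unfold segmentArea
  fun_prop

theorem integral_sqrt_one_add_sq_sub_sq {y : ℝ} (hy : 0 ≤ y) :
    ∫ x in y..1, √(1 + y ^ 2 - x ^ 2) = (1 + y ^ 2) * (π / 4 - arctan y) := by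
  have hend : arcsin (1 / √(1 + y ^ 2)) = π / 2 - arctan y := by
    rw [arctan_eq_arccos hy, arccos_eq_pi_div_two_sub_arcsin, sub_sub_cancel, one_div]
  rw [integral_sqrt_sub_sq (by linarith) (by nlinarith), hend, ← arctan_eq_arcsin,
    show 1 + y ^ 2 - 1 ^ 2 = y ^ 2 by ring, sqrt_sq hy, add_sub_cancel_right, sqrt_one]
  ring

theorem integral_sqrt_sub_eq_segmentArea {y : ℝ} (hy : 0 ≤ y) :
    ∫ x in y..1, (√(1 + y ^ 2 - x ^ 2) - (1 - x + y)) = segmentArea y := by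
  have hchord : ∫ x in y..1, (1 - x + y) = (1 - y ^ 2) / 2 := by
    have hderiv (x : ℝ) : HasDerivAt (fun x => (1 + y) * x - x ^ 2 / 2) (1 - x + y) x :=
      (((hasDerivAt_id x).const_mul (1 + y)).sub ((hasDerivAt_pow 2 x).div_const 2)).congr_deriv
        (by norm_num; ring)
    rw [intervalIntegral.integral_eq_sub_of_hasDerivAt (fun x _ => hderiv x)
      (Continuous.intervalIntegrable (by fun_prop) _ _)]
    ring
  rw [intervalIntegral.integral_sub (Continuous.intervalIntegrable (by fun_prop) _ _)
    (Continuous.intervalIntegrable (by fun_prop) _ _), integral_sqrt_one_add_sq_sub_sq hy, hchord,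
    segmentArea]

theorem segmentArea_nonneg {y : ℝ} (hy₀ : 0 ≤ y) (hy₁ : y ≤ 1) : 0 ≤ segmentArea y := by
  rw [← integral_sqrt_sub_eq_segmentArea hy₀]
  exact intervalIntegral.integral_nonneg hy₁
    fun x hx => sub_nonneg.2 (one_sub_add_le_sqrt hx.1 hx.2)

/-- The points `(x, z)` for which `(x, y, z)` lies in the solid. -/
def curvedPieceSlice (y : ℝ) : Set (ℝ × ℝ) :=
  {q | 0 ≤ y ∧ y ≤ q.1 ∧ q.1 ≤ 1 ∧ 1 - q.1 + y ≤ q.2 ∧ q.2 ≤ √(1 + y ^ 2 - q.1 ^ 2)}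

theorem support_volume_curvedPieceSlice_subset :
    (fun y => volume (curvedPieceSlice y)).support ⊆ Set.Icc 0 1 := by
  intro y hy
  obtain ⟨q, h₀, hyx, hx, -⟩ := nonempty_of_measure_ne_zero hy
  exact ⟨h₀, hyx.trans hx⟩

theorem volume_curvedPieceSlice {y : ℝ} (hy : y ∈ Set.Icc 0 1) :
    volume (curvedPieceSlice y) = ENNReal.ofReal (segmentArea y) := by
  have hregion : curvedPieceSlice y = {q : ℝ × ℝ | q.1 ∈ Set.Icc y 1 ∧
      q.2 ∈ Set.Icc (1 - q.1 + y) (√(1 + y ^ 2 - q.1 ^ 2))} := by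
    simp only [curvedPieceSlice, hy.1, true_and, Set.mem_Icc, and_assoc]
  rw [hregion, ← integral_sqrt_sub_eq_segmentArea hy.1]
  exact volume_region_between_cc_eq_ofReal_integral hy.2 (by fun_prop) (by fun_prop)
    (Continuous.intervalIntegrable (by fun_prop) y 1) fun x hx => one_sub_add_le_sqrt hx.1 hx.2

theorem hasDerivAt_segmentArea_antideriv (y : ℝ) :
    HasDerivAt (fun y => (y + y ^ 3 / 3) * (π / 4 - arctan y) + log (1 + y ^ 2) / 3 + y ^ 2 / 6
      - y / 2 + y ^ 3 / 6) (segmentArea y) y := by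
  have hsq : HasDerivAt (fun y : ℝ => y ^ 2) (2 * y) y := by simpa using hasDerivAt_pow 2 y
  have hcube : HasDerivAt (fun y : ℝ => y ^ 3) (3 * y ^ 2) y := by simpa using hasDerivAt_pow 3 y
  have hne : 1 + y ^ 2 ≠ 0 := by positivity
  have hparts := ((hasDerivAt_id y).add (hcube.div_const 3)).mul
    ((hasDerivAt_arctan y).const_sub (π / 4))
  have hlog := ((hsq.const_add 1).log hne).div_const 3
  refine ((((hparts.add hlog).add (hsq.div_const 6)).sub
    ((hasDerivAt_id y).div_const 2)).add (hcube.div_const 6)).congr_deriv ?_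
  simp only [segmentArea, Pi.add_apply, id]
  field_simp
  ring

theorem integral_segmentArea : ∫ y in (0 : ℝ)..1, segmentArea y = log 2 / 3 - 1 / 6 := by
  rw [intervalIntegral.integral_eq_sub_of_hasDerivAt
    (fun y _ => hasDerivAt_segmentArea_antideriv y)
    (continuous_segmentArea.intervalIntegrable _ _)]
  norm_num
  ring

theorem volume_curved_piece :
    volume {p : ℝ × ℝ × ℝ |
        0 ≤ p.2.1 ∧ p.2.1 ≤ p.1 ∧ p.1 ≤ 1 ∧
        1 - p.1 + p.2.1 ≤ p.2.2 ∧ p.2.2 ≤ Real.sqrt (1 + p.2.1 ^ 2 - p.1 ^ 2)} =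
      ENNReal.ofReal (Real.log 2 / 3 - 1 / 6) := by
  calc
    _ = ∫⁻ y, volume (curvedPieceSlice y) :=
        prod_prod_apply_eq_lintegral_middle (by measurability)
    _ = ∫⁻ y in Set.Icc 0 1, volume (curvedPieceSlice y) :=
        (setLIntegral_eq_of_support_subset support_volume_curvedPieceSlice_subset).symm
    _ = ∫⁻ y in Set.Icc 0 1, ENNReal.ofReal (segmentArea y) :=
        setLIntegral_congr_fun measurableSet_Icc fun _ hy => volume_curvedPieceSlice hy
    _ = ENNReal.ofReal (∫ y in (0 : ℝ)..1, segmentArea y) :=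
        setLIntegral_Icc_ofReal_eq_ofReal_integral zero_le_one
          (continuous_segmentArea.intervalIntegrable 0 1)
          fun _ hy => segmentArea_nonneg hy.1 hy.2
    _ = ENNReal.ofReal (Real.log 2 / 3 - 1 / 6) := by rw [integral_segmentArea]
end

section
/- The iterated integral I₁ = ∫₀¹ ∫_y¹ √(1 + y² − x²) dx dy is equal to (log 2)/3 + 1/6. -/
open Real

/-!
Fix `0 ≤ y ≤ 1`. The circle of radius `√(1 + y²)` about the origin passes through `(y, 1)` and
`(1, y)`, so the inner integral is the area under the arc joining these points. It equals the area
of the sector over that arc: passing from one region to the other exchanges two congruent right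
triangles with legs `1` and `y`. The sector has angle `π / 2 - 2 arctan y`, so its area is
`(1 + y²) (π / 4 - arctan y)`, which has an elementary antiderivative.
-/

lemma hasDerivAt_sqrt_sub_sq {c x : ℝ} (hx : c - x ^ 2 ≠ 0) :
    HasDerivAt (fun t ↦ √(c - t ^ 2)) (-x / √(c - x ^ 2)) x := by
  refine (((hasDerivAt_pow 2 x).const_sub c).sqrt hx).congr_deriv ?_
  field_simp
  norm_num

lemma hasDerivAt_arcsin_div {r x : ℝ} (hx : x ∈ Set.Ioo (-r) r) :
    HasDerivAt (fun t ↦ arcsin (t / r)) (1 / √(r ^ 2 - x ^ 2)) x := by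
  have hr : 0 < r := by linarith [hx.1, hx.2]
  have hlower : x / r ≠ -1 := ((lt_div_iff₀ hr).2 (by linarith [hx.1])).ne'
  have hupper : x / r ≠ 1 := ((div_lt_one hr).2 hx.2).ne
  have hsqrt_ratio : √(1 - (x / r) ^ 2) = √(r ^ 2 - x ^ 2) / r := by
    rw [div_pow, one_sub_div (by positivity), sqrt_div' _ (sq_nonneg r), sqrt_sq hr.le]
  refine ((hasDerivAt_arcsin hlower hupper).comp x ((hasDerivAt_id' x).div_const r)).congr_deriv ?_
  rw [hsqrt_ratio]
  field_simp

lemma hasDerivAt_primitive_sqrt_sq_sub_sq {r x : ℝ} (hx : x ∈ Set.Ioo (-r) r) :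
    HasDerivAt (fun t ↦ (t * √(r ^ 2 - t ^ 2) + r ^ 2 * arcsin (t / r)) / 2)
      √(r ^ 2 - x ^ 2) x := by
  have hpos : 0 < r ^ 2 - x ^ 2 := sub_pos.2 (sq_lt_sq' hx.1 hx.2)
  have hsqrt_ne : √(r ^ 2 - x ^ 2) ≠ 0 := (sqrt_pos.2 hpos).ne'
  refine ((((hasDerivAt_id' x).fun_mul (hasDerivAt_sqrt_sub_sq hpos.ne')).fun_add
    ((hasDerivAt_arcsin_div hx).const_mul (r ^ 2))).div_const 2).congr_deriv ?_
  field_simp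
  rw [sq_sqrt hpos.le]
  ring

lemma integral_sqrt_sq_sub_sq {r a b : ℝ} (ha : a ∈ Set.Icc (-r) r) (hb : b ∈ Set.Icc (-r) r) :
    ∫ x in a..b, √(r ^ 2 - x ^ 2) =
      (b * √(r ^ 2 - b ^ 2) + r ^ 2 * arcsin (b / r)) / 2 -
        (a * √(r ^ 2 - a ^ 2) + r ^ 2 * arcsin (a / r)) / 2 := by
  have hinterior : Set.Ioo (min a b) (max a b) ⊆ Set.Ioo (-r) r :=
    Set.Ioo_subset_Ioo (le_min ha.1 hb.1) (max_le ha.2 hb.2)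
  exact intervalIntegral.integral_eq_sub_of_hasDeriv_right
    (f := fun t ↦ (t * √(r ^ 2 - t ^ 2) + r ^ 2 * arcsin (t / r)) / 2)
    (by fun_prop)
    (fun x hx ↦ (hasDerivAt_primitive_sqrt_sq_sub_sq (hinterior hx)).hasDerivWithinAt)
    (Continuous.intervalIntegrable (by fun_prop) a b)

lemma sqrt_one_add_div_sq {b : ℝ} (a : ℝ) (hb : 0 < b) :
    √(1 + (a / b) ^ 2) = √(b ^ 2 + a ^ 2) / b := by
  rw [div_pow, one_add_div (by positivity), sqrt_div' _ (sq_nonneg b), sqrt_sq hb.le]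

lemma arcsin_div_sqrt_sq_add_sq {b : ℝ} (a : ℝ) (hb : 0 < b) :
    arcsin (a / √(b ^ 2 + a ^ 2)) = arctan (a / b) := by
  rw [arctan_eq_arcsin, sqrt_one_add_div_sq a hb, div_div_div_cancel_right₀ hb.ne']

lemma arccos_div_sqrt_sq_add_sq {a b : ℝ} (ha : 0 ≤ a) (hb : 0 < b) :
    arccos (b / √(b ^ 2 + a ^ 2)) = arctan (a / b) := by
  rw [arctan_eq_arccos (div_nonneg ha hb.le), sqrt_one_add_div_sq a hb, inv_div]

lemma integral_sqrt_sq_add_sq_sub_sq {a b : ℝ} (ha : 0 ≤ a) (hb : 0 < b) :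
    ∫ x in a..b, √(b ^ 2 + a ^ 2 - x ^ 2) = (b ^ 2 + a ^ 2) * (π / 4 - arctan (a / b)) := by
  have hradius : √(b ^ 2 + a ^ 2) ^ 2 = b ^ 2 + a ^ 2 := sq_sqrt (by positivity)
  have ha_mem : a ∈ Set.Icc (-√(b ^ 2 + a ^ 2)) √(b ^ 2 + a ^ 2) :=
    abs_le.1 (abs_le_sqrt (le_add_of_nonneg_left (sq_nonneg b)))
  have hb_mem : b ∈ Set.Icc (-√(b ^ 2 + a ^ 2)) √(b ^ 2 + a ^ 2) :=
    abs_le.1 (abs_le_sqrt (le_add_of_nonneg_right (sq_nonneg a)))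
  have hsegment := integral_sqrt_sq_sub_sq ha_mem hb_mem
  rw [hradius, add_sub_cancel_left, add_sub_cancel_right, sqrt_sq ha, sqrt_sq hb.le,
    arcsin_eq_pi_div_two_sub_arccos (b / _), arccos_div_sqrt_sq_add_sq ha hb,
    arcsin_div_sqrt_sq_add_sq a hb] at hsegment
  rw [hsegment]
  ring

lemma hasDerivAt_primitive_one_add_sq_mul_arctan (x : ℝ) :
    HasDerivAt (fun t ↦ (t + t ^ 3 / 3) * arctan t - t ^ 2 / 6 - log (1 + t ^ 2) / 3)
      ((1 + x ^ 2) * arctan x) x := by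
  have hpos : 1 + x ^ 2 ≠ 0 := by positivity
  have hcubic : HasDerivAt (fun t : ℝ ↦ t + t ^ 3 / 3) (1 + x ^ 2) x := by
    simpa using (hasDerivAt_id' x).fun_add ((hasDerivAt_pow 3 x).div_const 3)
  have hlog : HasDerivAt (fun t : ℝ ↦ log (1 + t ^ 2)) (2 * x / (1 + x ^ 2)) x := by
    simpa using ((hasDerivAt_pow 2 x).const_add 1).log hpos
  refine (((hcubic.fun_mul (hasDerivAt_arctan x)).fun_sub
    ((hasDerivAt_pow 2 x).div_const 6)).fun_sub (hlog.div_const 3)).congr_deriv ?_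
  field_simp
  push_cast
  ring

lemma integral_one_add_sq_mul_arctan (a b : ℝ) :
    ∫ x in a..b, (1 + x ^ 2) * arctan x =
      ((b + b ^ 3 / 3) * arctan b - b ^ 2 / 6 - log (1 + b ^ 2) / 3) -
        ((a + a ^ 3 / 3) * arctan a - a ^ 2 / 6 - log (1 + a ^ 2) / 3) :=
  intervalIntegral.integral_eq_sub_of_hasDerivAt
    (fun x _ ↦ hasDerivAt_primitive_one_add_sq_mul_arctan x)
    (Continuous.intervalIntegrable (by fun_prop) a b)

theorem iterated_integral_sqrt_part :
    ∫ y in (0:ℝ)..1, ∫ x in y..1, Real.sqrt (1 + y ^ 2 - x ^ 2) =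
      Real.log 2 / 3 + 1 / 6 := by
  have hinner : ∀ y ∈ Set.uIcc (0 : ℝ) 1,
      ∫ x in y..1, √(1 + y ^ 2 - x ^ 2) = (1 + y ^ 2) * (π / 4) - (1 + y ^ 2) * arctan y := by
    intro y hy
    rw [Set.uIcc_of_le zero_le_one] at hy
    simpa only [one_pow, div_one, mul_sub] using integral_sqrt_sq_add_sq_sub_sq hy.1 one_pos
  have hpolynomial : ∫ y in (0 : ℝ)..1, (1 + y ^ 2) * (π / 4) = π / 3 := by
    norm_num [intervalIntegral.integral_add]
  have harctan : ∫ y in (0 : ℝ)..1, (1 + y ^ 2) * arctan y = π / 3 - 1 / 6 - log 2 / 3 := by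
    norm_num [integral_one_add_sq_mul_arctan, arctan_one]
  rw [intervalIntegral.integral_congr hinner,
    intervalIntegral.integral_sub (Continuous.intervalIntegrable (by fun_prop) _ _)
      (Continuous.intervalIntegrable (by fun_prop) _ _), hpolynomial, harctan]
  ring
end

section
/- The integral ∫₀¹ ((1 + y²)/2) · ( arcsin(1/√(1 + y²)) − arcsin(y/√(1 + y²)) ) dy is equal to (log 2)/3 + 1/6. -/
open Real

/-!
For `0 ≤ y`, the two arcsines are the acute angles of the right triangle with legs `1` and `y`, so
their difference is `π / 2 - 2 * arctan y`. Integrating `arctan y * (1 + y ^ 2)` by parts removes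
the arctangent and leaves a rational function, whose proper part is a multiple of `y / (1 + y ^ 2)`
and contributes the logarithm.
-/

lemma arcsin_one_div_sqrt_one_add_sq {y : ℝ} (hy : 0 ≤ y) :
    arcsin (1 / √(1 + y ^ 2)) = π / 2 - arctan y := by
  rw [one_div, arctan_eq_arccos hy, arcsin_eq_pi_div_two_sub_arccos]

section IntervalIntegrals

open intervalIntegral

variable (a b : ℝ)

lemma intervalIntegrable_id_div_one_add_sq :
    IntervalIntegrable (fun y : ℝ ↦ y / (1 + y ^ 2)) MeasureTheory.volume a b :=
  Continuous.intervalIntegrable (by fun_prop (disch := intro; positivity)) a b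

lemma integral_id_div_one_add_sq :
    ∫ y in a..b, y / (1 + y ^ 2) = (log (1 + b ^ 2) - log (1 + a ^ 2)) / 2 := by
  have hderiv (y : ℝ) : HasDerivAt (fun y ↦ log (1 + y ^ 2) / 2) (y / (1 + y ^ 2)) y := by
    have hne : 1 + y ^ 2 ≠ 0 := by positivity
    refine ((((hasDerivAt_pow 2 y).const_add 1).log hne).div_const 2).congr_deriv ?_
    push_cast
    field_simp
  rw [integral_eq_sub_of_hasDerivAt (fun y _ ↦ hderiv y)
    (intervalIntegrable_id_div_one_add_sq a b), sub_div]

lemma integral_one_div_one_add_sq_mul_cubic :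
    ∫ y in a..b, 1 / (1 + y ^ 2) * (y + y ^ 3 / 3) =
      (b ^ 2 - a ^ 2) / 6 + (log (1 + b ^ 2) - log (1 + a ^ 2)) / 3 := by
  have hdivision (y : ℝ) :
      1 / (1 + y ^ 2) * (y + y ^ 3 / 3) = 1 / 3 * y + 2 / 3 * (y / (1 + y ^ 2)) := by
    field_simp
    ring
  simp only [hdivision]
  rw [integral_add (intervalIntegrable_id.const_mul _)
      ((intervalIntegrable_id_div_one_add_sq a b).const_mul _),
    integral_const_mul, integral_const_mul, integral_id, integral_id_div_one_add_sq]
  ring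

lemma integral_arctan_mul_one_add_sq :
    ∫ y in a..b, arctan y * (1 + y ^ 2) =
      arctan b * (b + b ^ 3 / 3) - arctan a * (a + a ^ 3 / 3) -
        ((b ^ 2 - a ^ 2) / 6 + (log (1 + b ^ 2) - log (1 + a ^ 2)) / 3) := by
  have hcubic (y : ℝ) : HasDerivAt (fun y ↦ y + y ^ 3 / 3) (1 + y ^ 2) y :=
    ((hasDerivAt_id' y).add ((hasDerivAt_pow 3 y).div_const 3)).congr_deriv (by norm_num)
  rw [integral_mul_deriv_eq_deriv_mul (fun y _ ↦ hasDerivAt_arctan y) (fun y _ ↦ hcubic y)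
      intervalIntegrable_one_div_one_add_sq (Continuous.intervalIntegrable (by fun_prop) a b),
    integral_one_div_one_add_sq_mul_cubic]

end IntervalIntegrals

theorem integral_arcsin_difference :
    ∫ y in (0:ℝ)..1,
        ((1 + y ^ 2) / 2) *
          (Real.arcsin (1 / Real.sqrt (1 + y ^ 2)) -
            Real.arcsin (y / Real.sqrt (1 + y ^ 2))) =
      Real.log 2 / 3 + 1 / 6 := by
  have hintegrand : Set.EqOn
      (fun y : ℝ ↦ (1 + y ^ 2) / 2 * (arcsin (1 / √(1 + y ^ 2)) - arcsin (y / √(1 + y ^ 2))))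
      (fun y ↦ π / 4 * (1 + y ^ 2) - arctan y * (1 + y ^ 2)) (Set.uIcc 0 1) := by
    intro y hy
    rw [Set.uIcc_of_le zero_le_one] at hy
    simp only [arcsin_one_div_sqrt_one_add_sq hy.1, ← arctan_eq_arcsin]
    ring
  have hpoly : ∫ y in (0 : ℝ)..1, (1 + y ^ 2) = 4 / 3 := by norm_num
  have harctan : ∫ y in (0 : ℝ)..1, arctan y * (1 + y ^ 2) = π / 3 - (1 / 6 + log 2 / 3) := by
    simp only [integral_arctan_mul_one_add_sq, arctan_one, arctan_zero, one_pow,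
      one_add_one_eq_two, zero_pow two_ne_zero, add_zero, log_one]
    ring
  rw [intervalIntegral.integral_congr hintegrand,
    intervalIntegral.integral_sub (Continuous.intervalIntegrable (by fun_prop) 0 1)
      (Continuous.intervalIntegrable (by fun_prop) 0 1),
    intervalIntegral.integral_const_mul, hpoly, harctan]
  ring
end

section
/- The integral (1/2) ∫₀¹ ( (z² + 1)(π/2 − 2 arctan z) + z² − 1 ) dz is equal to (log 2)/3 − 1/6. -/
open Real

/-!
Integrating `x ^ n * arctan x` by parts leaves the rational integral `∫ x ^ (n + 1) / (1 + x ^ 2)`.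
For even `n`, division with remainder by `1 + x ^ 2` reduces it to `∫ x / (1 + x ^ 2)`, the source
of the logarithm. Since `arctan 1 = π / 4`, the multiples of `π` cancel on `[0, 1]`.
-/

section ArctanMoments

variable (a b : ℝ) (n : ℕ)

lemma integral_id_mul_inv_one_add_sq :
    ∫ x in a..b, x * (1 + x ^ 2)⁻¹ = (log (1 + b ^ 2) - log (1 + a ^ 2)) / 2 := by
  have hderiv (x : ℝ) : HasDerivAt (fun x ↦ log (1 + x ^ 2) / 2) (x * (1 + x ^ 2)⁻¹) x := by
    have hne : 1 + x ^ 2 ≠ 0 := by positivity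
    refine ((((hasDerivAt_pow 2 x).const_add 1).log hne).div_const 2).congr_deriv ?_
    push_cast
    field_simp
  rw [intervalIntegral.integral_eq_sub_of_hasDerivAt (fun x _ ↦ hderiv x)
    (Continuous.intervalIntegrable (by fun_prop (disch := intro; positivity)) a b), sub_div]

lemma integral_pow_add_two_mul_inv_one_add_sq :
    ∫ x in a..b, x ^ (n + 2) * (1 + x ^ 2)⁻¹ =
      (b ^ (n + 1) - a ^ (n + 1)) / (n + 1) - ∫ x in a..b, x ^ n * (1 + x ^ 2)⁻¹ := by
  have hdiv (x : ℝ) : x ^ (n + 2) * (1 + x ^ 2)⁻¹ = x ^ n - x ^ n * (1 + x ^ 2)⁻¹ := by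
    field_simp
    ring
  simp only [hdiv]
  rw [intervalIntegral.integral_sub ((continuous_pow n).intervalIntegrable a b)
    (Continuous.intervalIntegrable (by fun_prop (disch := intro; positivity)) a b), integral_pow]

lemma integral_pow_mul_arctan :
    ∫ x in a..b, x ^ n * arctan x =
      (b ^ (n + 1) * arctan b - a ^ (n + 1) * arctan a -
        ∫ x in a..b, x ^ (n + 1) * (1 + x ^ 2)⁻¹) / (n + 1) := by
  have hpow (x : ℝ) : HasDerivAt (fun x ↦ x ^ (n + 1)) ((n + 1) * x ^ n) x := by
    simpa using hasDerivAt_pow (n + 1) x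
  have hparts := intervalIntegral.integral_mul_deriv_eq_deriv_mul
    (fun x _ ↦ hpow x) (fun x _ ↦ hasDerivAt_arctan' x)
    (Continuous.intervalIntegrable (by fun_prop) a b)
    (Continuous.intervalIntegrable (by fun_prop (disch := intro; positivity)) a b)
  simp only [mul_assoc, intervalIntegral.integral_const_mul] at hparts
  rw [hparts]
  field_simp
  ring

lemma integral_arctan :
    ∫ x in a..b, arctan x =
      b * arctan b - a * arctan a - (log (1 + b ^ 2) - log (1 + a ^ 2)) / 2 := by
  simpa [integral_id_mul_inv_one_add_sq] using integral_pow_mul_arctan a b 0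

lemma integral_sq_mul_arctan :
    ∫ x in a..b, x ^ 2 * arctan x =
      (b ^ 3 * arctan b - a ^ 3 * arctan a - (b ^ 2 - a ^ 2) / 2 +
        (log (1 + b ^ 2) - log (1 + a ^ 2)) / 2) / 3 := by
  have hrational := integral_pow_add_two_mul_inv_one_add_sq a b 1
  simp only [pow_one, integral_id_mul_inv_one_add_sq] at hrational
  rw [integral_pow_mul_arctan, hrational]
  push_cast
  ring

end ArctanMoments

lemma integral_sq_add_one_mul_arctan_zero_one :
    ∫ x in (0 : ℝ)..1, (x ^ 2 + 1) * arctan x = π / 3 - 1 / 6 - log 2 / 3 := by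
  simp only [add_mul, one_mul]
  rw [intervalIntegral.integral_add (Continuous.intervalIntegrable (by fun_prop) _ _)
    (Continuous.intervalIntegrable (by fun_prop) _ _), integral_sq_mul_arctan, integral_arctan]
  simp only [arctan_one, one_pow, one_add_one_eq_two, zero_pow two_ne_zero, add_zero, log_one]
  ring

theorem li_integral :
    (1 / 2) * ∫ z in (0:ℝ)..1,
        ((z ^ 2 + 1) * (π / 2 - 2 * Real.arctan z) + z ^ 2 - 1) =
      Real.log 2 / 3 - 1 / 6 := by
  have hsplit (z : ℝ) : (z ^ 2 + 1) * (π / 2 - 2 * arctan z) + z ^ 2 - 1 =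
      ((π / 2 + 1) * z ^ 2 + (π / 2 - 1)) - 2 * ((z ^ 2 + 1) * arctan z) := by
    ring
  have hpoly : ∫ z in (0:ℝ)..1, ((π / 2 + 1) * z ^ 2 + (π / 2 - 1)) = 2 * π / 3 - 2 / 3 := by
    rw [intervalIntegral.integral_add (Continuous.intervalIntegrable (by fun_prop) _ _)
      (Continuous.intervalIntegrable (by fun_prop) _ _), intervalIntegral.integral_const_mul,
      integral_pow, intervalIntegral.integral_const, smul_eq_mul]
    ring
  simp only [hsplit]
  rw [intervalIntegral.integral_sub (Continuous.intervalIntegrable (by fun_prop) _ _)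
    (Continuous.intervalIntegrable (by fun_prop) _ _), intervalIntegral.integral_const_mul,
    hpoly, integral_sq_add_one_mul_arctan_zero_one]
  ring
end

section
/- For every angle θ with 0 < θ ≤ π/2, the Lebesgue volume of the intersection of the two solid cylinders {(x,y,z) ∈ ℝ³ : y² + z² ≤ 1} and {(x,y,z) ∈ ℝ³ : (x sin θ − y cos θ)² + z² ≤ 1}, whose axes meet at angle θ, is 16/(3 sin θ); in particular it is two thirds of the volume 8/sin θ of the circumscribed parallelepiped (box). -/
open MeasureTheory Real

/-! The linear map `(x, y, z) ↦ (x sin θ - y cos θ, y, z)` has determinant `sin θ`, and the skew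
bicylinder and its circumscribed box are the preimages under it of the orthogonal bicylinder and of
a cube. The sections of the orthogonal bicylinder of radius `r` at height `z` are squares of area
`4 (r ^ 2 - z ^ 2)`. -/

section Prod

variable {α β γ : Type*} [MeasurableSpace α] [MeasurableSpace β] [MeasurableSpace γ]

lemma volume_prod_preimage_mul_sub (ν : Measure β) [SFinite ν] {s : ℝ} (hs : s ≠ 0)
    {g : β → ℝ} (hg : Measurable g) {A : Set (ℝ × β)} (hA : MeasurableSet A) :
    (volume.prod ν) ((fun p : ℝ × β ↦ (p.1 * s - g p.2, p.2)) ⁻¹' A) =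
      ENNReal.ofReal |s⁻¹| * (volume.prod ν) A := by
  have hshear : Measurable fun p : ℝ × β ↦ (p.1 * s - g p.2, p.2) := by fun_prop
  rw [Measure.prod_apply_symm (hshear hA), Measure.prod_apply_symm hA,
    ← lintegral_const_mul _ (measurable_measure_prodMk_right hA)]
  refine lintegral_congr fun b ↦ ?_
  calc volume ((· * s) ⁻¹' ((· - g b) ⁻¹' ((fun x ↦ (x, b)) ⁻¹' A)))
    _ = ENNReal.ofReal |s⁻¹| * volume ((· - g b) ⁻¹' ((fun x ↦ (x, b)) ⁻¹' A)) :=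
      Real.volume_preimage_mul_right hs _
    _ = ENNReal.ofReal |s⁻¹| * volume ((fun x ↦ (x, b)) ⁻¹' A) := by
      simp only [sub_eq_add_neg, measure_preimage_add_right]

lemma prod_prod_setOf_mem_and_mem (μ : Measure α) (ν : Measure β) (ρ : Measure γ)
    [SFinite μ] [SFinite ν] [SFinite ρ] {A : Set (β × γ)} {B : Set (α × γ)}
    (hA : MeasurableSet A) (hB : MeasurableSet B) :
    (μ.prod (ν.prod ρ)) {p | p.2 ∈ A ∧ (p.1, p.2.2) ∈ B} =
      ∫⁻ z, ν {y | (y, z) ∈ A} * μ {x | (x, z) ∈ B} ∂ρ := by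
  have hmeas : MeasurableSet {q : (α × β) × γ | (q.1.2, q.2) ∈ A ∧ (q.1.1, q.2) ∈ B} :=
    (hA.preimage (by fun_prop)).inter (hB.preimage (by fun_prop))
  have hsection (z : γ) : (fun q : α × β ↦ (q, z)) ⁻¹'
      {q : (α × β) × γ | (q.1.2, q.2) ∈ A ∧ (q.1.1, q.2) ∈ B} =
      {x | (x, z) ∈ B} ×ˢ {y | (y, z) ∈ A} :=
    Set.ext fun _ ↦ and_comm
  rw [← (measurePreserving_prodAssoc μ ν ρ).measure_preimage_equiv]
  calc ((μ.prod ν).prod ρ) {q | (q.1.2, q.2) ∈ A ∧ (q.1.1, q.2) ∈ B}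
    _ = ∫⁻ z, (μ.prod ν) ({x | (x, z) ∈ B} ×ˢ {y | (y, z) ∈ A}) ∂ρ := by
      simp only [Measure.prod_apply_symm hmeas, hsection]
    _ = ∫⁻ z, ν {y | (y, z) ∈ A} * μ {x | (x, z) ∈ B} ∂ρ := by
      simp only [Measure.prod_prod, mul_comm]

end Prod

lemma volume_setOf_sq_le (t : ℝ) : volume {x : ℝ | x ^ 2 ≤ t} = ENNReal.ofReal (2 * √t) := by
  obtain ht | ht := le_or_gt 0 t
  · have hIcc : {x : ℝ | x ^ 2 ≤ t} = Set.Icc (-√t) √t := Set.ext fun x ↦ Real.sq_le ht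
    rw [hIcc, Real.volume_Icc, sub_neg_eq_add, two_mul]
  · have hempty : {x : ℝ | x ^ 2 ≤ t} = ∅ :=
      Set.eq_empty_of_forall_notMem fun x hx ↦ (ht.trans_le (sq_nonneg x)).not_ge hx
    rw [hempty, measure_empty, Real.sqrt_eq_zero_of_nonpos ht.le, mul_zero, ENNReal.ofReal_zero]

lemma lintegral_ofReal_eq_intervalIntegral {f : ℝ → ℝ} {a b : ℝ} (hab : a ≤ b)
    (hf : IntervalIntegrable f volume a b) (hf_nonneg : ∀ x ∈ Set.Ioc a b, 0 ≤ f x)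
    (hf_nonpos : ∀ x ∉ Set.Ioc a b, f x ≤ 0) :
    ∫⁻ x, ENNReal.ofReal (f x) = ENNReal.ofReal (∫ x in a..b, f x) := by
  have hsupport : (fun x ↦ ENNReal.ofReal (f x)).support ⊆ Set.Ioc a b :=
    Function.support_subset_iff'.2 fun x hx ↦ ENNReal.ofReal_of_nonpos (hf_nonpos x hx)
  rw [← setLIntegral_eq_of_support_subset hsupport, intervalIntegral.integral_of_le hab,
    ofReal_integral_eq_lintegral_ofReal hf.1
      ((ae_restrict_iff' measurableSet_Ioc).2 (.of_forall hf_nonneg))]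

/-- The solid Steinmetz bicylinder: the common part of the two solid cylinders of radius `r` about
the first two coordinate axes. -/
def steinmetzSolid (r : ℝ) : Set (ℝ × ℝ × ℝ) :=
  {p | p.2.1 ^ 2 + p.2.2 ^ 2 ≤ r ^ 2 ∧ p.1 ^ 2 + p.2.2 ^ 2 ≤ r ^ 2}

lemma measurableSet_steinmetzSolid (r : ℝ) : MeasurableSet (steinmetzSolid r) := by
  unfold steinmetzSolid
  measurability

lemma volume_steinmetzSolid_eq_lintegral (r : ℝ) :
    volume (steinmetzSolid r) = ∫⁻ z : ℝ, ENNReal.ofReal (4 * (r ^ 2 - z ^ 2)) := by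
  have hdisk : MeasurableSet {q : ℝ × ℝ | q.1 ^ 2 + q.2 ^ 2 ≤ r ^ 2} :=
    measurableSet_le (by fun_prop) (by fun_prop)
  have hsection (z : ℝ) : volume {x : ℝ | x ^ 2 + z ^ 2 ≤ r ^ 2} =
      ENNReal.ofReal (2 * √(r ^ 2 - z ^ 2)) := by
    simp only [← le_sub_iff_add_le, volume_setOf_sq_le]
  have hsquare (t : ℝ) : ENNReal.ofReal (2 * √t) * ENNReal.ofReal (2 * √t) =
      ENNReal.ofReal (4 * t) := by
    obtain ht | ht := le_total 0 t
    · rw [← ENNReal.ofReal_mul (by positivity), mul_mul_mul_comm, Real.mul_self_sqrt ht]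
      norm_num
    · rw [Real.sqrt_eq_zero_of_nonpos ht, ENNReal.ofReal_of_nonpos (p := 4 * t) (by linarith)]
      simp
  calc volume (steinmetzSolid r)
    _ = ∫⁻ z : ℝ, volume {y : ℝ | y ^ 2 + z ^ 2 ≤ r ^ 2} *
          volume {x : ℝ | x ^ 2 + z ^ 2 ≤ r ^ 2} := by
      rw [Measure.volume_eq_prod, Measure.volume_eq_prod]
      exact prod_prod_setOf_mem_and_mem volume volume volume hdisk hdisk
    _ = ∫⁻ z : ℝ, ENNReal.ofReal (4 * (r ^ 2 - z ^ 2)) := by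
      simp only [hsection, hsquare]

lemma volume_steinmetzSolid {r : ℝ} (hr : 0 ≤ r) :
    volume (steinmetzSolid r) = ENNReal.ofReal (16 * r ^ 3 / 3) := by
  have hintegral : ∫ z in -r..r, 4 * (r ^ 2 - z ^ 2) = 16 * r ^ 3 / 3 := by
    rw [intervalIntegral.integral_const_mul, intervalIntegral.integral_sub (by simp) (by simp),
      integral_pow, intervalIntegral.integral_const, smul_eq_mul]
    ring
  rw [volume_steinmetzSolid_eq_lintegral, ← hintegral]
  refine lintegral_ofReal_eq_intervalIntegral (by linarith)
    (Continuous.intervalIntegrable (by fun_prop) _ _) (fun z hz ↦ ?_) fun z hz ↦ ?_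
  · nlinarith [hz.1, hz.2]
  · have hsq : r ^ 2 ≤ z ^ 2 := by
      contrapose! hz
      exact ⟨(abs_lt_of_sq_lt_sq' hz hr).1, (abs_lt_of_sq_lt_sq' hz hr).2.le⟩
    linarith

/-- The cube of side `2 * r` centred at the origin, which circumscribes `steinmetzSolid r`. -/
def centeredCube (r : ℝ) : Set (ℝ × ℝ × ℝ) :=
  {p | |p.2.1| ≤ r ∧ |p.1| ≤ r ∧ |p.2.2| ≤ r}

lemma measurableSet_centeredCube (r : ℝ) : MeasurableSet (centeredCube r) := by
  unfold centeredCube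
  measurability

lemma volume_centeredCube {r : ℝ} (hr : 0 ≤ r) :
    volume (centeredCube r) = ENNReal.ofReal (8 * r ^ 3) := by
  have hprod : centeredCube r = Set.Icc (-r) r ×ˢ Set.Icc (-r) r ×ˢ Set.Icc (-r) r := by
    ext p
    simp only [centeredCube, Set.mem_ofPred_eq, Set.mem_prod, Set.mem_Icc, abs_le]
    tauto
  rw [hprod, Measure.volume_eq_prod, Measure.prod_prod, Measure.volume_eq_prod, Measure.prod_prod,
    Real.volume_Icc, ← ENNReal.ofReal_mul (by linarith), ← ENNReal.ofReal_mul (by linarith)]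
  ring_nf

theorem volume_skew_bicylinder_general {θ r : ℝ} (hθ : Real.sin θ ≠ 0) (hr : 0 ≤ r) :
    volume {p : ℝ × ℝ × ℝ |
        p.2.1 ^ 2 + p.2.2 ^ 2 ≤ r ^ 2 ∧
        (p.1 * Real.sin θ - p.2.1 * Real.cos θ) ^ 2 + p.2.2 ^ 2 ≤ r ^ 2} =
      ENNReal.ofReal (16 * r ^ 3 / (3 * |Real.sin θ|)) ∧
    volume {p : ℝ × ℝ × ℝ |
        |p.2.1| ≤ r ∧ |p.1 * Real.sin θ - p.2.1 * Real.cos θ| ≤ r ∧ |p.2.2| ≤ r} =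
      ENNReal.ofReal (8 * r ^ 3 / |Real.sin θ|) := by
  have hpreimage {A : Set (ℝ × ℝ × ℝ)} (hA : MeasurableSet A) {v : ℝ}
      (hv : volume A = ENNReal.ofReal v) :
      volume ((fun p : ℝ × ℝ × ℝ ↦ (p.1 * Real.sin θ - p.2.1 * Real.cos θ, p.2)) ⁻¹' A) =
        ENNReal.ofReal (v / |Real.sin θ|) := by
    rw [Measure.volume_eq_prod,
      volume_prod_preimage_mul_sub volume hθ (g := fun q ↦ q.1 * Real.cos θ) (by fun_prop) hA,
      ← Measure.volume_eq_prod, hv, ← ENNReal.ofReal_mul (abs_nonneg _), abs_inv,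
      inv_mul_eq_div]
  constructor
  · rw [← div_div]
    exact hpreimage (measurableSet_steinmetzSolid r) (volume_steinmetzSolid hr)
  · exact hpreimage (measurableSet_centeredCube r) (volume_centeredCube hr)

theorem volume_skew_bicylinder (θ : ℝ) (hθ0 : 0 < θ) (hθ1 : θ ≤ π / 2) :
    volume {p : ℝ × ℝ × ℝ |
        p.2.1 ^ 2 + p.2.2 ^ 2 ≤ 1 ∧
        (p.1 * Real.sin θ - p.2.1 * Real.cos θ) ^ 2 + p.2.2 ^ 2 ≤ 1} =
      ENNReal.ofReal (16 / (3 * Real.sin θ)) ∧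
    volume {p : ℝ × ℝ × ℝ |
        |p.2.1| ≤ 1 ∧ |p.1 * Real.sin θ - p.2.1 * Real.cos θ| ≤ 1 ∧ |p.2.2| ≤ 1} =
      ENNReal.ofReal (8 / Real.sin θ) := by
  have hsin : 0 < Real.sin θ := Real.sin_pos_of_pos_of_lt_pi hθ0 (by linarith)
  simpa only [one_pow, mul_one, abs_of_pos hsin] using
    volume_skew_bicylinder_general hsin.ne' zero_le_one
end
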